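/- arXiv:2511.02273 — 2 statements merged into one kernel-verified Lean document; each statement's English description precedes it below -/
import Mathlib

section
/- There exists an absolute constant C > 0 with the following property. Let R₀ > 0, let v₁, v₂ ∈ ℝ³ with |v₁ − v₂| ≥ (10/13)R₀, let R satisfy R₀/13 ≤ R ≤ 2R₀/13, let 0 < R₃ ≤ R₀/104, and let v₃ ∈ ℝ³ be arbitrary. Then the Lebesgue measure (in ℝ⁶) of the set {(w₁,w₂) ∈ Q_R(v₁) × Q_R(v₂) : S_{w₁,w₂} ∩ B_{R₃}(v₃) ≠ ∅} is at most C·(R₃/R₀)·|Q_R(v₁)|·|Q_R(v₂)|. -/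
noncomputable section

open MeasureTheory Real Set
open scoped RealInnerProductSpace

/-- `ℝ³` as a Euclidean space. -/
abbrev R3 : Type := EuclideanSpace ℝ (Fin 3)

/-- The unit sphere `𝕊²` in `ℝ³`. -/
abbrev S2 : Type := Metric.sphere (0 : R3) 1

/-- The surface measure on the unit sphere in `ℝ³` (total mass `4π`). -/
def sphMeasure : Measure S2 := Measure.toSphere (volume : Measure R3)

/-- Post-collision velocity `v' = (v+v_*)/2 + (|v-v_*|/2)σ`. -/
def vOut (v w : R3) (σ : S2) : R3 := (2⁻¹ : ℝ) • (v + w) + (‖v - w‖ / 2) • (σ : R3)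

/-- Post-collision velocity `v'_* = (v+v_*)/2 - (|v-v_*|/2)σ`. -/
def vOutStar (v w : R3) (σ : S2) : R3 := (2⁻¹ : ℝ) • (v + w) - (‖v - w‖ / 2) • (σ : R3)

/-- `cos θ = ((v - v_*)/|v - v_*|) · σ`. -/
def cosAngle (v w : R3) (σ : S2) : ℝ := ⟪‖v - w‖⁻¹ • (v - w), (σ : R3)⟫

/-- The collision kernel `B(v - v_*, σ) = |v - v_*|^γ b(cos θ)`. -/
def Bker (γ : ℝ) (b : ℝ → ℝ) (v w : R3) (σ : S2) : ℝ := ‖v - w‖ ^ γ * b (cosAngle v w σ)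

/-- Grad's angular cutoff assumption (H1), with the standing assumptions on `b`:
`b` is measurable, nonnegative, symmetric (`b(cos(π-θ)) = b(cos θ)`), and
`0 < C_b = 2π∫₀^π b(cos θ) sin θ dθ < ∞`. -/
structure GradCutoff (b : ℝ → ℝ) : Prop where
  measurable : Measurable b
  nonneg : ∀ x : ℝ, 0 ≤ b x
  symm : ∀ θ : ℝ, b (Real.cos (π - θ)) = b (Real.cos θ)
  integrable : IntervalIntegrable (fun θ : ℝ => b (Real.cos θ) * Real.sin θ) volume 0 π
  pos : 0 < ∫ θ in (0:ℝ)..π, b (Real.cos θ) * Real.sin θ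

/-- `C_b = 2π ∫₀^π b(cos θ) sin θ dθ`. -/
def Cb (b : ℝ → ℝ) : ℝ := 2 * π * ∫ θ in (0:ℝ)..π, b (Real.cos θ) * Real.sin θ

/-- `C_{b,2} = 2π ∫₀^π b(cos θ) sin³ θ dθ`. -/
def Cb2 (b : ℝ → ℝ) : ℝ := 2 * π * ∫ θ in (0:ℝ)..π, b (Real.cos θ) * Real.sin θ ^ 3

/-- `φ(ε) = ∫_{𝕊²} b(cos θ)(1_{0<θ<ε} + 1_{π-ε<θ<π}) dσ`,
written via the polar-angle parametrization of the sphere. -/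
def phiAng (b : ℝ → ℝ) (ε : ℝ) : ℝ :=
  2 * π * ((∫ θ in (0:ℝ)..ε, b (Real.cos θ) * Real.sin θ)
    + ∫ θ in (π - ε)..π, b (Real.cos θ) * Real.sin θ)

/-- Weighted `L¹` norm `‖f‖_{1,s} = ∫ |f(v)| (1+|v|²)^{s/2} dv`. -/
def wnorm (s : ℝ) (f : R3 → ℝ) : ℝ := ∫ v : R3, |f v| * (1 + ‖v‖ ^ 2) ^ (s / 2)

/-- Membership in the weighted space `L¹_s`. -/
def MemL1s (s : ℝ) (f : R3 → ℝ) : Prop :=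
  Integrable (fun v : R3 => |f v| * (1 + ‖v‖ ^ 2) ^ (s / 2))

/-- The Boltzmann–Fermi–Dirac collision operator `Q_FD(f,f)`. -/
def QFD (γ : ℝ) (b : ℝ → ℝ) (f : R3 → ℝ) (v : R3) : ℝ :=
  ∫ w : R3, ∫ σ : S2, Bker γ b v w σ *
      (f (vOut v w σ) * f (vOutStar v w σ) * (1 - f v) * (1 - f w)
        - f v * f w * (1 - f (vOut v w σ)) * (1 - f (vOutStar v w σ))) ∂sphMeasure

/-- `Q₁(f₁,f₂,f₃)(v) = ∫∫ B f₁(v') f₂(v'_*) f₃(v_*) dσ dv_*`. -/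
def Q1 (γ : ℝ) (b : ℝ → ℝ) (f₁ f₂ f₃ : R3 → ℝ) (v : R3) : ℝ :=
  ∫ w : R3, ∫ σ : S2, Bker γ b v w σ *
      (f₁ (vOut v w σ) * f₂ (vOutStar v w σ) * f₃ w) ∂sphMeasure

/-- `L_FD(f, 1-f, 1-f)(v) = ∫∫ B f(v_*)(1-f(v'))(1-f(v'_*)) dσ dv_*`. -/
def LFD (γ : ℝ) (b : ℝ → ℝ) (f : R3 → ℝ) (v : R3) : ℝ :=
  ∫ w : R3, ∫ σ : S2, Bker γ b v w σ *
      (f w * (1 - f (vOut v w σ)) * (1 - f (vOutStar v w σ))) ∂sphMeasure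

/-- The Fermi–Dirac entropy `S(f)` (with `0·ln 0 = 0`, as `Real.log 0 = 0`). -/
def entropy (f : R3 → ℝ) : ℝ :=
  -∫ v : R3, (f v * Real.log (f v) + (1 - f v) * Real.log (1 - f v))

/-- A conservative mild solution of the Boltzmann–Fermi–Dirac equation with
initial datum `f₀`. -/
structure IsFDSolution (γ : ℝ) (b : ℝ → ℝ) (f₀ : R3 → ℝ) (f : ℝ → R3 → ℝ) : Prop where
  measurable : ∀ t : ℝ, Measurable (f t)
  nonneg : ∀ t : ℝ, 0 ≤ t → ∀ v : R3, 0 ≤ f t v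
  le_one : ∀ t : ℝ, 0 ≤ t → ∀ v : R3, f t v ≤ 1
  memL12 : ∀ t : ℝ, 0 ≤ t → MemL1s 2 (f t)
  contL12 : ∀ t : ℝ, 0 ≤ t → ∀ ε : ℝ, 0 < ε → ∃ δ > 0, ∀ s : ℝ, 0 ≤ s →
      |s - t| < δ → wnorm 2 (fun v => f s v - f t v) < ε
  mild : ∃ Z : Set R3, volume Z = 0 ∧ ∀ t : ℝ, 0 ≤ t → ∀ v : R3, v ∉ Z →
      f t v = f₀ v + ∫ τ in (0:ℝ)..t, QFD γ b (f τ) v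
  mass : ∀ t : ℝ, 0 ≤ t → ∫ v : R3, f t v = ∫ v : R3, f₀ v
  momentum : ∀ t : ℝ, 0 ≤ t → ∫ v : R3, f t v • v = ∫ v : R3, f₀ v • v
  energy : ∀ t : ℝ, 0 ≤ t → ∫ v : R3, f t v * ‖v‖ ^ 2 = ∫ v : R3, f₀ v * ‖v‖ ^ 2

/-- Axis-parallel closed cube in `ℝ³` with side length `R` and center `x₀`. -/
def Qcube (R : ℝ) (x₀ : R3) : Set R3 := {y : R3 | ∀ i : Fin 3, |y i - x₀ i| ≤ R / 2}

/-!
By Thales' theorem, `x` lies on the sphere with diameter `w₁w₂` if and only if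
`⟪w₁ - x, w₂ - x⟫ = 0`. Hence, if this sphere meets the ball of radius `r` around `z`, then
`|⟪w₁ - z, w₂ - z⟫|` is at most `3 * r` times the larger of `‖w₁ - z‖` and `‖w₂ - z‖`, so the
endpoint nearer to `z` lies in a slab of half-width `3 * r` whose normal is determined by the other
endpoint. A slab of half-width `s` fills at most a fraction `2 * √n * s / R` of a cube of side `R`
in `ℝⁿ`: replace a coordinate in which the normal is largest by the inner product with the normal.
Integrating this over the farther endpoint gives the bound.
-/

section Thales

variable {E : Type*} [NormedAddCommGroup E] [InnerProductSpace ℝ E]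

theorem mem_sphere_iff_inner_sub_sub_eq_zero {w₁ w₂ x : E} :
    x ∈ Metric.sphere ((2⁻¹ : ℝ) • (w₁ + w₂)) (‖w₁ - w₂‖ / 2) ↔ ⟪w₁ - x, w₂ - x⟫ = 0 := by
  rw [InnerProductGeometry.inner_eq_zero_iff_angle_eq_pi_div_two, ← vsub_eq_sub w₁ x,
    ← vsub_eq_sub w₂ x, ← EuclideanGeometry.angle,
    EuclideanGeometry.Sphere.angle_eq_pi_div_two_iff_mem_sphere_ofDiameter,
    EuclideanGeometry.Sphere.ofDiameter, EuclideanGeometry.mem_sphere, Metric.mem_sphere,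
    midpoint_eq_smul_add, invOf_eq_inv, dist_eq_norm w₁ w₂]

theorem abs_inner_le_of_inner_sub_sub_eq_zero {a b u : E} {r : ℝ} (hu : ‖u‖ ≤ r)
    (hba : ‖b‖ ≤ ‖a‖) (h : ⟪a - u, b - u⟫ = 0) : |⟪a, b⟫| ≤ 3 * r * ‖a‖ := by
  rcases le_total ‖a‖ r with har | hra
  · calc |⟪a, b⟫| ≤ ‖a‖ * ‖b‖ := abs_real_inner_le_norm a b
      _ ≤ 3 * r * ‖a‖ := by nlinarith [norm_nonneg a, norm_nonneg b]
  · have inner_eq : ⟪a, b⟫ = ⟪u, a + b - u⟫ := by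
      simp only [inner_sub_left, inner_sub_right, inner_add_right] at h ⊢
      linarith [real_inner_comm a u]
    have norm_le : ‖a + b - u‖ ≤ 3 * ‖a‖ := by
      linarith [norm_sub_le (a + b) u, norm_add_le a b]
    have hr : 0 ≤ r := (norm_nonneg u).trans hu
    calc |⟪a, b⟫| ≤ ‖u‖ * ‖a + b - u‖ := inner_eq ▸ abs_real_inner_le_norm u (a + b - u)
      _ ≤ r * (3 * ‖a‖) := by gcongr
      _ = 3 * r * ‖a‖ := by ring

theorem abs_inner_le_of_sphere_inter_closedBall_nonempty {w₁ w₂ z : E} {r : ℝ}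
    (h : (Metric.sphere ((2⁻¹ : ℝ) • (w₁ + w₂)) (‖w₁ - w₂‖ / 2) ∩
      Metric.closedBall z r).Nonempty) (hle : ‖w₂ - z‖ ≤ ‖w₁ - z‖) :
    |⟪w₁ - z, w₂ - z⟫| ≤ 3 * r * ‖w₁ - z‖ := by
  obtain ⟨x, hx_sphere, hx_ball⟩ := h
  refine abs_inner_le_of_inner_sub_sub_eq_zero (mem_closedBall_iff_norm.1 hx_ball) hle ?_
  simpa only [sub_sub_sub_cancel_right] using mem_sphere_iff_inner_sub_sub_eq_zero.1 hx_sphere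

/-- The pairs `(w₁, w₂)` in `A × B` such that `w₂` lies in the slab of half-width `s` around the
hyperplane through `z` orthogonal to `w₁ - z`. The slab condition is multiplied through by
`‖w₁ - z‖`, so that it is closed in `(w₁, w₂)`; it is vacuous for `w₁ = z`. -/
def slabPairs (A B : Set E) (z : E) (s : ℝ) : Set (E × E) :=
  {p | p.1 ∈ A ∧ p.2 ∈ B ∧ |⟪p.1 - z, p.2 - z⟫| ≤ s * ‖p.1 - z‖}

theorem isClosed_slabPairs {A B : Set E} (hA : IsClosed A) (hB : IsClosed B) (z : E) (s : ℝ) :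
    IsClosed (slabPairs A B z s) :=
  have hslab : IsClosed {p : E × E | |⟪p.1 - z, p.2 - z⟫| ≤ s * ‖p.1 - z‖} :=
    isClosed_le (by fun_prop) (by fun_prop)
  (hA.preimage continuous_fst).inter ((hB.preimage continuous_snd).inter hslab)

theorem setOf_sphere_inter_closedBall_nonempty_subset (A B : Set E) (z : E) (r : ℝ) :
    {p : E × E | p.1 ∈ A ∧ p.2 ∈ B ∧
      (Metric.sphere ((2⁻¹ : ℝ) • (p.1 + p.2)) (‖p.1 - p.2‖ / 2) ∩
        Metric.closedBall z r).Nonempty} ⊆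
      slabPairs A B z (3 * r) ∪ Prod.swap ⁻¹' slabPairs B A z (3 * r) := by
  rintro ⟨w₁, w₂⟩ ⟨hw₁, hw₂, h⟩
  rcases le_total ‖w₂ - z‖ ‖w₁ - z‖ with hle | hle
  · exact Or.inl ⟨hw₁, hw₂, abs_inner_le_of_sphere_inter_closedBall_nonempty h hle⟩
  · rw [add_comm, norm_sub_rev] at h
    exact Or.inr ⟨hw₂, hw₁, abs_inner_le_of_sphere_inter_closedBall_nonempty h hle⟩

end Thales

theorem measure_prod_le_mul_of_ae_section_le {α β : Type*} [MeasurableSpace α]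
    [MeasurableSpace β] {μ : Measure α} {ν : Measure β} {A : Set α} {S : Set (α × β)}
    {c : ENNReal} (hS : MeasurableSet S) (hA : MeasurableSet A) (hSA : S ⊆ Prod.fst ⁻¹' A)
    (hc : ∀ᵐ x ∂μ, ν (Prod.mk x ⁻¹' S) ≤ c) : μ.prod ν S ≤ c * μ A := by
  calc μ.prod ν S ≤ ∫⁻ x, ν (Prod.mk x ⁻¹' S) ∂μ := Measure.prod_apply_le hS
    _ ≤ ∫⁻ x, A.indicator (fun _ => c) x ∂μ := by
      refine lintegral_mono_ae (hc.mono fun x hx => ?_)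
      by_cases hxA : x ∈ A
      · rwa [indicator_of_mem hxA]
      · have : Prod.mk x ⁻¹' S = ∅ := eq_empty_of_forall_notMem fun _ hy => hxA (hSA hy)
        simp only [this, measure_empty, zero_le]
    _ = c * μ A := lintegral_indicator_const hA c

/-- The closed axis-parallel cube with side length `R` and centre `x` in the Euclidean space `ℝ^ι`.
For `ι = Fin 3` this is `Qcube R x` by definition. -/
def euclideanCube {ι : Type*} (R : ℝ) (x : EuclideanSpace ℝ ι) : Set (EuclideanSpace ℝ ι) :=
  {y | ∀ i, |y i - x i| ≤ R / 2}

theorem isClosed_euclideanCube {ι : Type*} (R : ℝ) (x : EuclideanSpace ℝ ι) :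
    IsClosed (euclideanCube R x) := by
  simp only [euclideanCube, ofPred_forall]
  exact isClosed_iInter fun i => isClosed_le (by fun_prop) continuous_const

theorem euclideanCube_eq_preimage_pi {ι : Type*} (R : ℝ) (x : EuclideanSpace ℝ ι) :
    euclideanCube R x = WithLp.ofLp ⁻¹' univ.pi fun i => Metric.closedBall (x i) (R / 2) := by
  ext y
  simp only [euclideanCube, mem_ofPred_eq, mem_preimage, mem_univ_pi, Metric.mem_closedBall,
    Real.dist_eq]

section Volume

variable {ι : Type*} [Fintype ι]

theorem volume_preimage_ofLp (S : Set (ι → ℝ)) :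
    volume (WithLp.ofLp ⁻¹' S : Set (EuclideanSpace ℝ ι)) = volume S :=
  (EuclideanSpace.volume_preserving_symm_measurableEquiv_toLp ι).measure_preimage_equiv S

theorem volume_euclideanCube (R : ℝ) (x : EuclideanSpace ℝ ι) :
    volume (euclideanCube R x) = ENNReal.ofReal R ^ Fintype.card ι := by
  simp only [euclideanCube_eq_preimage_pi, volume_preimage_ofLp, volume_pi_pi,
    Real.volume_closedBall, mul_div_cancel₀ R (two_ne_zero' ℝ), Finset.prod_const, Finset.card_univ]

theorem exists_norm_le_sqrt_card_mul_abs [Nonempty ι] (a : EuclideanSpace ℝ ι) :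
    ∃ i, ‖a‖ ≤ √(Fintype.card ι) * |a i| := by
  obtain ⟨i, -, hi⟩ := Finset.univ.exists_max_image (fun j => |a j|) Finset.univ_nonempty
  refine ⟨i, ?_⟩
  rw [EuclideanSpace.norm_eq, ← Real.sqrt_sq_eq_abs, ← Real.sqrt_mul (Nat.cast_nonneg _)]
  refine Real.sqrt_le_sqrt ?_
  simpa only [Real.norm_eq_abs, sq_abs, nsmul_eq_mul, Finset.card_univ] using
    Finset.sum_le_card_nsmul Finset.univ _ _ fun j hj => sq_le_sq.2 (hi j hj)

theorem det_updateRow_one {K : Type*} [CommRing K] [DecidableEq ι] (i : ι) (a : ι → K) :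
    (Matrix.updateRow 1 i a).det = a i := by
  simp only [← Matrix.cramer_transpose_apply, Matrix.transpose_one, Matrix.cramer_one,
    Module.End.one_apply]

open Matrix in
theorem volume_preimage_update_dotProduct [DecidableEq ι] {a : ι → ℝ} {i : ι} (hi : a i ≠ 0)
    (B : Set (ι → ℝ)) :
    volume ((fun y => Function.update y i (a ⬝ᵥ y)) ⁻¹' B) =
      ENNReal.ofReal |(a i)⁻¹| * volume B := by
  have toLin_eq : ⇑(toLin' (updateRow 1 i a)) = fun y => Function.update y i (a ⬝ᵥ y) := by
    funext y
    rw [toLin'_apply, updateRow_mulVec, one_mulVec]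
  have det_eq : LinearMap.det (toLin' (updateRow 1 i a)) = a i := by
    rw [LinearMap.det_toLin', det_updateRow_one]
  rw [← toLin_eq, Measure.addHaar_preimage_linearMap _ (det_eq ▸ hi), det_eq]

theorem volume_euclideanCube_inter_abs_inner_le {R : ℝ} (hR : 0 < R) {a : EuclideanSpace ℝ ι}
    {i : ι} (hi : a i ≠ 0) (x z : EuclideanSpace ℝ ι) (t : ℝ) :
    volume (euclideanCube R x ∩ {w | |⟪a, w - z⟫| ≤ t}) ≤
      ENNReal.ofReal (2 * t / (|a i| * R)) * volume (euclideanCube R x) := by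
  classical
  let sides := Function.update (fun j => Metric.closedBall (x j) (R / 2)) i
    (Metric.closedBall ⟪a, z⟫ t)
  have sides_self : sides i = Metric.closedBall ⟪a, z⟫ t := Function.update_self ..
  have sides_of_ne {j : ι} (hj : j ≠ i) : sides j = Metric.closedBall (x j) (R / 2) :=
    Function.update_of_ne hj ..
  have subset : euclideanCube R x ∩ {w | |⟪a, w - z⟫| ≤ t} ⊆
      WithLp.ofLp ⁻¹' ((fun y => Function.update y i (a.ofLp ⬝ᵥ y)) ⁻¹' univ.pi sides) := by
    rintro w ⟨hw, hslab⟩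
    refine update_mem_pi_iff.2 ⟨fun j hj => ?_, fun _ => ?_⟩
    · rw [sides_of_ne hj.2]
      exact hw j
    · rw [sides_self, dotProduct_comm, Metric.mem_closedBall]
      rwa [mem_ofPred_eq, inner_sub_right] at hslab
  have volume_sides : ∏ j, volume (sides j) =
      ENNReal.ofReal (2 * t) * ENNReal.ofReal R ^ (Fintype.card ι - 1) := by
    rw [← Finset.mul_prod_erase _ _ (Finset.mem_univ i), sides_self,
      Real.volume_closedBall, ← Finset.card_univ, ← Finset.card_erase_of_mem (Finset.mem_univ i)]
    refine congrArg _ (Finset.prod_eq_pow_card fun j hj => ?_)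
    rw [sides_of_ne (Finset.ne_of_mem_erase hj), Real.volume_closedBall,
      mul_div_cancel₀ R two_ne_zero]
  have : Nonempty ι := ⟨i⟩
  calc volume (euclideanCube R x ∩ {w | |⟪a, w - z⟫| ≤ t})
      ≤ ENNReal.ofReal |(a i)⁻¹| *
        (ENNReal.ofReal (2 * t) * ENNReal.ofReal R ^ (Fintype.card ι - 1)) := by
        refine (measure_mono subset).trans_eq ?_
        rw [volume_preimage_ofLp, volume_preimage_update_dotProduct hi, volume_pi_pi, volume_sides]
    _ = ENNReal.ofReal (2 * t / (|a i| * R)) * ENNReal.ofReal R ^ Fintype.card ι := by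
      rw [← mul_pow_sub_one Fintype.card_ne_zero, ← mul_assoc, ← mul_assoc,
        ← ENNReal.ofReal_mul (abs_nonneg _), ← ENNReal.ofReal_mul' hR.le, abs_inv]
      congr 2
      field_simp
    _ = ENNReal.ofReal (2 * t / (|a i| * R)) * volume (euclideanCube R x) := by
      rw [volume_euclideanCube]

theorem volume_euclideanCube_inter_slab_le [Nonempty ι] {R s : ℝ} (hR : 0 < R) (hs : 0 ≤ s)
    {a : EuclideanSpace ℝ ι} (ha : a ≠ 0) (x z : EuclideanSpace ℝ ι) :
    volume (euclideanCube R x ∩ {w | |⟪a, w - z⟫| ≤ s * ‖a‖}) ≤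
      ENNReal.ofReal (2 * √(Fintype.card ι) * s / R) * volume (euclideanCube R x) := by
  obtain ⟨i, hi⟩ := exists_norm_le_sqrt_card_mul_abs a
  have hai : 0 < |a i| := pos_of_mul_pos_right ((norm_pos_iff.2 ha).trans_le hi) (by positivity)
  refine (volume_euclideanCube_inter_abs_inner_le hR (abs_pos.1 hai) x z (s * ‖a‖)).trans ?_
  gcongr ENNReal.ofReal ?_ * _
  calc 2 * (s * ‖a‖) / (|a i| * R)
      ≤ 2 * (s * (√(Fintype.card ι) * |a i|)) / (|a i| * R) := by gcongr
    _ = 2 * √(Fintype.card ι) * s / R := by field_simp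

theorem volume_slabPairs_euclideanCube_le [Nonempty ι] (R₁ : ℝ) {R₂ s : ℝ} (hR₂ : 0 < R₂)
    (hs : 0 ≤ s) (x₁ x₂ z : EuclideanSpace ℝ ι) :
    volume (slabPairs (euclideanCube R₁ x₁) (euclideanCube R₂ x₂) z s) ≤
      ENNReal.ofReal (2 * √(Fintype.card ι) * s / R₂) * volume (euclideanCube R₂ x₂) *
        volume (euclideanCube R₁ x₁) := by
  have hQ₁ := isClosed_euclideanCube R₁ x₁
  have hQ₂ := isClosed_euclideanCube R₂ x₂
  refine measure_prod_le_mul_of_ae_section_le (isClosed_slabPairs hQ₁ hQ₂ z s).measurableSet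
    hQ₁.measurableSet (fun _ hp => hp.1) ?_
  filter_upwards [Measure.ae_ne volume z] with w hw
  exact (measure_mono fun _ hp => hp.2).trans
    (volume_euclideanCube_inter_slab_le hR₂ hs (sub_ne_zero.2 hw) x₂ z)

theorem sphere_ball_intersection_measure_general [Nonempty ι] {R₁ R₂ r : ℝ} (hR₁ : 0 < R₁)
    (hR₂ : 0 < R₂) (hr : 0 ≤ r) (v₁ v₂ v₃ : EuclideanSpace ℝ ι) :
    volume {p : EuclideanSpace ℝ ι × EuclideanSpace ℝ ι |
        p.1 ∈ euclideanCube R₁ v₁ ∧ p.2 ∈ euclideanCube R₂ v₂ ∧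
          (Metric.sphere ((2⁻¹ : ℝ) • (p.1 + p.2)) (‖p.1 - p.2‖ / 2) ∩
            Metric.closedBall v₃ r).Nonempty} ≤
      ENNReal.ofReal (6 * √(Fintype.card ι) * (r / R₁ + r / R₂)) *
        volume (euclideanCube R₁ v₁) * volume (euclideanCube R₂ v₂) := by
  set Q₁ := euclideanCube R₁ v₁
  set Q₂ := euclideanCube R₂ v₂
  have volume_swap : volume (Prod.swap ⁻¹' slabPairs Q₂ Q₁ v₃ (3 * r)) =
      volume (slabPairs Q₂ Q₁ v₃ (3 * r)) :=
    Measure.measurePreserving_swap.measure_preimage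
      (isClosed_slabPairs (isClosed_euclideanCube R₂ v₂)
        (isClosed_euclideanCube R₁ v₁) v₃ _).measurableSet.nullMeasurableSet
  calc _ ≤ volume (slabPairs Q₁ Q₂ v₃ (3 * r)) + volume (slabPairs Q₂ Q₁ v₃ (3 * r)) :=
        volume_swap ▸ (measure_mono (setOf_sphere_inter_closedBall_nonempty_subset ..)).trans
          (measure_union_le _ _)
    _ ≤ ENNReal.ofReal (2 * √(Fintype.card ι) * (3 * r) / R₂) * volume Q₂ * volume Q₁ +
        ENNReal.ofReal (2 * √(Fintype.card ι) * (3 * r) / R₁) * volume Q₁ * volume Q₂ :=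
      add_le_add (volume_slabPairs_euclideanCube_le R₁ hR₂ (by positivity) ..)
        (volume_slabPairs_euclideanCube_le R₂ hR₁ (by positivity) ..)
    _ = ENNReal.ofReal (6 * √(Fintype.card ι) * (r / R₁ + r / R₂)) * volume Q₁ * volume Q₂ := by
      rw [mul_right_comm _ (volume Q₂), ← add_mul, ← add_mul,
        ← ENNReal.ofReal_add (by positivity) (by positivity)]
      congr 3
      ring

end Volume

/-- Measure bound for the set of pairs `(w₁, w₂)` in two well-separated
cubes whose collision sphere `S_{w₁,w₂}` meets a small ball `B_{R₃}(v₃)`. -/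
theorem sphere_ball_intersection_measure :
    ∃ C : ℝ, 0 < C ∧ ∀ R₀ : ℝ, 0 < R₀ → ∀ v₁ v₂ : R3, 10 / 13 * R₀ ≤ ‖v₁ - v₂‖ →
      ∀ R : ℝ, R₀ / 13 ≤ R → R ≤ 2 * R₀ / 13 → ∀ R₃ : ℝ, 0 < R₃ → R₃ ≤ R₀ / 104 →
      ∀ v₃ : R3,
        volume {p : R3 × R3 | p.1 ∈ Qcube R v₁ ∧ p.2 ∈ Qcube R v₂ ∧
            (Metric.sphere ((2⁻¹ : ℝ) • (p.1 + p.2)) (‖p.1 - p.2‖ / 2) ∩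
              Metric.closedBall v₃ (R₃ / 2)).Nonempty} ≤
          ENNReal.ofReal (C * (R₃ / R₀)) * volume (Qcube R v₁) * volume (Qcube R v₂) := by
  refine ⟨78 * √3, by positivity, fun R₀ hR₀ v₁ v₂ _ R hR _ R₃ hR₃ _ v₃ => ?_⟩
  have hR_pos : 0 < R := (by positivity : 0 < R₀ / 13).trans_le hR
  refine (sphere_ball_intersection_measure_general hR_pos hR_pos (by positivity) v₁ v₂ v₃).trans ?_
  gcongr ENNReal.ofReal ?_ * _ * _
  calc 6 * √(Fintype.card (Fin 3)) * (R₃ / 2 / R + R₃ / 2 / R) = 6 * √3 * (R₃ / R) := by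
        rw [Fintype.card_fin]; push_cast; ring
    _ ≤ 6 * √3 * (R₃ / (R₀ / 13)) := by gcongr
    _ = 78 * √3 * (R₃ / R₀) := by field_simp; norm_num
end
end

section
/- Assume 0 ≤ γ ≤ 2, (H1), and (H2). Let f be a conservative mild solution of the Boltzmann–Fermi–Dirac equation with initial datum f₀, and suppose there exist 0 < ε < 1, v̄ ∈ ℝ³, δ > 0 and r₀ > 0 with |v̄| < r₀ such that ε ≤ f₀(v) ≤ 1 − ε whenever |v − v̄| ≤ δ. Then for each t > 0 there exist constants C₁(t) > 0 and C₂(t) > 0 such that for almost every v ∈ ℝ³, C₁(t) e^{−C₂(t)|v|²} ≤ f(t,v) ≤ 1 − C₁(t) e^{−C₂(t)|v|^{p}}, where p = 2·(ln 3)/(ln 2); moreover, for every 1 ≤ T < ∞, inf_{T^{−1} ≤ t ≤ T} C₁(t) > 0 and sup_{T^{−1} ≤ t ≤ T} C₂(t) < ∞. -/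
noncomputable section

open MeasureTheory Real Set
open scoped RealInnerProductSpace

/-!
Along the flow, `∂ₜf = (1 - f) Q⁺(f) - f Q⁺(1 - f)`, where the gain rate
`Q⁺(g)(v) = ∫∫ B g(v') g(v'_*) (1 - g(v_*)) dσ dv_*` is at most `K (1 + |v|²)` for `g = f` and for
`g = 1 - f`. By Grönwall, bounds `f ≥ ε` and `1 - f ≥ ε` on a ball persist, up to a factor, on any
bounded time interval, and `f` becomes positive wherever its gain rate is. If moreover `f ≥ a` on a
ball of radius `r`, then a point `v` at distance up to `√2 (r - δ/10)` from the centre is reached by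
nearly right-angled collisions with `v'` and `v'_*` in that ball and `v_*` in the initial ball of
radius `δ`, so the lower bound spreads. Iterating over shrinking time steps, the radii grow like
`√2ⁿ` and the bounds decay like `q ^ 2ⁿ`, that is, like a Gaussian in the radius. The equation is
invariant under the particle–hole symmetry `f ↦ 1 - f`, so the argument applies to both functions
and gives both inequalities.
-/

/-! ### Integration over the sphere -/

lemma natCast_mul_ofReal_one_div {n : ℕ} (hn : n ≠ 0) :
    (n : ENNReal) * ENNReal.ofReal (1 / n) = 1 := by
  rw [← ENNReal.ofReal_natCast, ← ENNReal.ofReal_mul (by positivity),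
    mul_one_div_cancel (by positivity), ENNReal.ofReal_one]

section Sphere

variable {E : Type*} [NormedAddCommGroup E] [NormedSpace ℝ E] [FiniteDimensional ℝ E]
  [MeasurableSpace E] [BorelSpace E] [Nontrivial E]

lemma lintegral_toSphere (μ : Measure E) [μ.IsAddHaarMeasure] {g : E → ENNReal}
    (hg : Measurable g) :
    ∫⁻ σ, g σ ∂μ.toSphere
      = Module.finrank ℝ E * ∫⁻ x in Metric.ball 0 1, g (‖x‖⁻¹ • x) ∂μ := by
  have hpos : 0 < Module.finrank ℝ E := Module.finrank_pos
  let I : Set (Ioi (0 : ℝ)) := Iio ⟨1, mem_Ioi.2 one_pos⟩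
  have hI : MeasurableSet I := measurableSet_Iio
  have polar : ∫⁻ x in Metric.ball 0 1, g (‖x‖⁻¹ • x) ∂μ
      = (∫⁻ σ, g σ ∂μ.toSphere) * Measure.volumeIoiPow (Module.finrank ℝ E - 1) I := by
    rw [← lintegral_indicator_one hI, ← lintegral_prod_mul (by fun_prop)
      (measurable_one.indicator hI).aemeasurable,
      ← μ.measurePreserving_homeomorphUnitSphereProd.lintegral_comp_emb
        (Homeomorph.measurableEmbedding _), ← lintegral_indicator measurableSet_ball]
    conv_lhs => rw [← restrict_compl_singleton (μ := μ) 0,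
      ← lintegral_subtype_comap (measurableSet_singleton _).compl]
    refine lintegral_congr fun x => ?_
    simp [indicator, I, ← Subtype.coe_lt_coe]
  rw [polar, Measure.volumeIoiPow_apply_Iio, one_pow, ← Nat.cast_add_one,
    Nat.sub_add_cancel hpos, mul_comm, mul_assoc, mul_comm (ENNReal.ofReal _),
    natCast_mul_ofReal_one_div hpos.ne', mul_one]

end Sphere

lemma lintegral_Ioo_comp_div {s : ℝ} (hs : 0 < s) (φ : ℝ → ENNReal) :
    ∫⁻ x in Ioo (-s) s, φ (x / s) = ENNReal.ofReal s * ∫⁻ x in Ioo (-1) 1, φ x := by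
  have himage : (fun x => s * x) '' Ioo (-1) 1 = Ioo (-s) s := by
    rw [image_mul_left_Ioo hs, mul_neg, mul_one]
  rw [← himage, lintegral_image_eq_lintegral_abs_deriv_mul (f' := fun _ => s) measurableSet_Ioo
    (fun x _ => by simpa using ((hasDerivAt_id x).const_mul s).hasDerivWithinAt)
    (mul_right_injective₀ hs.ne').injOn, ← lintegral_const_mul' _ _ ENNReal.ofReal_ne_top]
  simp only [abs_of_pos hs, mul_div_cancel_left₀ _ hs.ne']

lemma image_sqrt_sq_add_sq_Ioi (x : ℝ) : (fun ρ : ℝ => √(x ^ 2 + ρ ^ 2)) '' Ioi 0 = Ioi |x| := by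
  ext s
  constructor
  · rintro ⟨ρ, hρ : 0 < ρ, rfl⟩
    exact lt_sqrt_of_sq_lt (by rw [sq_abs]; nlinarith)
  · intro (hs : |x| < s)
    have hxs : x ^ 2 < s ^ 2 := sq_lt_sq' (abs_lt.1 hs).1 (abs_lt.1 hs).2
    refine ⟨√(s ^ 2 - x ^ 2), Real.sqrt_pos.2 (by linarith), ?_⟩
    simp only [Real.sq_sqrt (sub_nonneg.2 hxs.le), add_sub_cancel,
      Real.sqrt_sq ((abs_nonneg x).trans hs.le)]

lemma hasDerivAt_sqrt_sq_add_sq (x : ℝ) {ρ : ℝ} (hρ : 0 < ρ) :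
    HasDerivAt (fun ρ : ℝ => √(x ^ 2 + ρ ^ 2)) (ρ / √(x ^ 2 + ρ ^ 2)) ρ := by
  have h := ((hasDerivAt_pow 2 ρ).const_add (x ^ 2)).sqrt (by positivity)
  refine h.congr_deriv ?_
  field_simp
  norm_num

lemma lintegral_Ioi_comp_sqrt_sq_add_sq (x : ℝ) (g : ℝ → ENNReal) :
    ∫⁻ ρ in Ioi 0, ENNReal.ofReal ρ * g √(x ^ 2 + ρ ^ 2)
      = ∫⁻ s in Ioi |x|, ENNReal.ofReal s * g s := by
  have hinj : InjOn (fun ρ : ℝ => √(x ^ 2 + ρ ^ 2)) (Ioi 0) := by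
    intro a (ha : 0 < a) c (hc : 0 < c) h
    rw [Real.sqrt_inj (by positivity) (by positivity), add_right_inj] at h
    exact (pow_left_inj₀ ha.le hc.le two_ne_zero).1 h
  rw [← image_sqrt_sq_add_sq_Ioi, lintegral_image_eq_lintegral_abs_deriv_mul measurableSet_Ioi
    (fun ρ hρ => (hasDerivAt_sqrt_sq_add_sq x hρ).hasDerivWithinAt) hinj]
  refine setLIntegral_congr_fun measurableSet_Ioi fun ρ (hρ : 0 < ρ) => ?_
  have hpos : 0 < √(x ^ 2 + ρ ^ 2) := Real.sqrt_pos.2 (by positivity)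
  simp only [← mul_assoc, ← ENNReal.ofReal_mul (abs_nonneg _)]
  rw [abs_of_pos (by positivity), div_mul_cancel₀ _ hpos.ne']

lemma lintegral_plane_radial {g : ℝ → ENNReal} (hg : Measurable g) :
    ∫⁻ p : ℝ × ℝ, g (p.1 ^ 2 + p.2 ^ 2)
      = ENNReal.ofReal (2 * π) * ∫⁻ ρ in Ioi 0, ENNReal.ofReal ρ * g (ρ ^ 2) := by
  have hradius (p : ℝ × ℝ) :
      (polarCoord.symm p).1 ^ 2 + (polarCoord.symm p).2 ^ 2 = p.1 ^ 2 := by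
    simp only [polarCoord_symm_apply]
    linear_combination p.1 ^ 2 * sin_sq_add_cos_sq p.2
  rw [← lintegral_comp_polarCoord_symm]
  simp only [hradius, smul_eq_mul]
  rw [polarCoord_target, Measure.volume_eq_prod, ← Measure.prod_restrict,
    lintegral_prod _ (by fun_prop)]
  simp only [lintegral_const, Measure.restrict_apply MeasurableSet.univ, univ_inter,
    Real.volume_Ioo, sub_neg_eq_add, ← two_mul]
  rw [lintegral_mul_const _ (by fun_prop), mul_comm]

lemma lintegral_R3_coord_normSq {Ψ : ℝ → ℝ → ENNReal} (hΨ : Measurable (Function.uncurry Ψ)) :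
    ∫⁻ x : R3, Ψ (x 0) (‖x‖ ^ 2)
      = ∫⁻ x : ℝ, ∫⁻ p : ℝ × ℝ, Ψ x (x ^ 2 + (p.1 ^ 2 + p.2 ^ 2)) := by
  have hnorm (x : R3) : ‖x‖ ^ 2 = x 0 ^ 2 + (x 1 ^ 2 + x 2 ^ 2) := by
    rw [EuclideanSpace.real_norm_sq_eq, Fin.sum_univ_three, add_assoc]
  have hsplit : ∫⁻ x : R3, Ψ (x 0) (‖x‖ ^ 2)
      = ∫⁻ z : ℝ × (Fin 2 → ℝ), Ψ z.1 (z.1 ^ 2 + (z.2 0 ^ 2 + z.2 1 ^ 2)) := by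
    simp only [hnorm]
    rw [← (PiLp.volume_preserving_toLp (Fin 3)).lintegral_comp_emb
        (MeasurableEquiv.toLp 2 _).measurableEmbedding,
      ← (volume_preserving_piFinSuccAbove (fun _ : Fin 3 => ℝ) 0).lintegral_comp_emb
        (MeasurableEquiv.measurableEmbedding _)]
    rfl
  have hmeas : Measurable fun z : ℝ × (Fin 2 → ℝ) =>
      Ψ z.1 (z.1 ^ 2 + (z.2 0 ^ 2 + z.2 1 ^ 2)) :=
    hΨ.comp (by fun_prop : Measurable fun z : ℝ × (Fin 2 → ℝ) =>
      (z.1, z.1 ^ 2 + (z.2 0 ^ 2 + z.2 1 ^ 2)))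
  rw [hsplit, Measure.volume_eq_prod, lintegral_prod _ hmeas.aemeasurable]
  refine lintegral_congr fun x => ?_
  rw [← (volume_preserving_finTwoArrow ℝ).lintegral_comp_emb
    (MeasurableEquiv.measurableEmbedding _)]
  rfl

lemma lintegral_R3_coord_norm {Ψ : ℝ → ℝ → ENNReal} (hΨ : Measurable (Function.uncurry Ψ)) :
    ∫⁻ x : R3, Ψ (x 0) ‖x‖
      = ENNReal.ofReal (2 * π) * ∫⁻ x : ℝ, ∫⁻ s in Ioi |x|, ENNReal.ofReal s * Ψ x s := by
  have h := lintegral_R3_coord_normSq (Ψ := fun x r => Ψ x √r)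
    (hΨ.comp (by fun_prop : Measurable fun p : ℝ × ℝ => (p.1, √p.2)))
  simp only [Real.sqrt_sq (norm_nonneg _)] at h
  rw [h, ← lintegral_const_mul' _ _ ENNReal.ofReal_ne_top]
  refine lintegral_congr fun x => ?_
  rw [lintegral_plane_radial (g := fun r => Ψ x √(x ^ 2 + r))
      (hΨ.comp (by fun_prop : Measurable fun r : ℝ => (x, √(x ^ 2 + r)))),
    lintegral_Ioi_comp_sqrt_sq_add_sq]

lemma lintegral_R3_inner_norm {k : R3} (hk : ‖k‖ = 1) {Ψ : ℝ → ℝ → ENNReal}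
    (hΨ : Measurable (Function.uncurry Ψ)) :
    ∫⁻ x : R3, Ψ ⟪k, x⟫ ‖x‖
      = ENNReal.ofReal (2 * π) * ∫⁻ x : ℝ, ∫⁻ s in Ioi |x|, ENNReal.ofReal s * Ψ x s := by
  have hnorm : ‖k‖ = ‖(EuclideanSpace.single 0 1 : R3)‖ := by simp [hk]
  have hreflect := Submodule.reflection_sub hnorm
  set R := (ℝ ∙ (k - (EuclideanSpace.single 0 1 : R3)))ᗮ.reflection
  have hcoord (x : R3) : ⟪k, x⟫ = (R x) 0 := by
    rw [← R.inner_map_map, hreflect, EuclideanSpace.inner_single_left, map_one, one_mul]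
  rw [← lintegral_R3_coord_norm hΨ, ← R.measurePreserving.lintegral_comp_emb
    R.toMeasurableEquiv.measurableEmbedding fun x => Ψ (x 0) ‖x‖]
  simp only [hcoord, LinearIsometryEquiv.norm_map]

lemma lintegral_indicator_abs_lt_comp_div (φ : ℝ → ENNReal) (s : ℝ) :
    ∫⁻ x, {q : ℝ × ℝ | |q.1| < q.2 ∧ q.2 < 1}.indicator
          (fun q => ENNReal.ofReal q.2 * φ (q.1 / q.2)) (x, s)
      = (Ioo 0 1).indicator (fun s => ENNReal.ofReal (s ^ 2) * ∫⁻ x in Ioo (-1) 1, φ x) s := by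
  by_cases hs : s ∈ Ioo 0 1
  · rw [indicator_of_mem hs, sq, ENNReal.ofReal_mul hs.1.le, mul_assoc,
      ← lintegral_Ioo_comp_div hs.1, ← lintegral_const_mul' _ _ ENNReal.ofReal_ne_top,
      ← lintegral_indicator measurableSet_Ioo]
    refine lintegral_congr fun x => ?_
    by_cases hx : |x| < s <;> simp [indicator, hx, hs.2, ← abs_lt]
  · rw [indicator_of_notMem hs]
    refine (lintegral_congr fun x => indicator_of_notMem ?_ _).trans lintegral_zero
    exact fun hx => hs ⟨(abs_nonneg x).trans_lt hx.1, hx.2⟩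

lemma lintegral_Ioo_sq :
    ∫⁻ s in Ioo (0 : ℝ) 1, ENNReal.ofReal (s ^ 2) = ENNReal.ofReal (1 / 3) := by
  rw [Measure.restrict_congr_set Ioo_ae_eq_Ioc, ← ofReal_integral_eq_lintegral_ofReal
    (intervalIntegral.intervalIntegrable_pow _).1
    (Filter.Eventually.of_forall fun s => by positivity),
    ← intervalIntegral.integral_of_le zero_le_one, integral_pow]
  norm_num

lemma lintegral_lintegral_Ioi_abs_comp_div {φ : ℝ → ENNReal} (hφ : Measurable φ) :
    ∫⁻ x : ℝ, ∫⁻ s in Ioi |x|, ENNReal.ofReal s * (Iio 1).indicator (fun s => φ (x / s)) s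
      = ENNReal.ofReal (1 / 3) * ∫⁻ x in Ioo (-1) 1, φ x := by
  have hmeas : MeasurableSet {q : ℝ × ℝ | |q.1| < q.2 ∧ q.2 < 1} :=
    (measurableSet_lt (by fun_prop) measurable_snd).inter
      (measurableSet_lt measurable_snd measurable_const)
  have hindicator (x : ℝ) :
      ∫⁻ s in Ioi |x|, ENNReal.ofReal s * (Iio 1).indicator (fun s => φ (x / s)) s
        = ∫⁻ s, {q : ℝ × ℝ | |q.1| < q.2 ∧ q.2 < 1}.indicator
            (fun q => ENNReal.ofReal q.2 * φ (q.1 / q.2)) (x, s) := by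
    rw [← lintegral_indicator measurableSet_Ioi]
    refine lintegral_congr fun s => ?_
    by_cases h1 : |x| < s <;> by_cases h2 : s < 1 <;> simp [h1, h2]
  simp_rw [hindicator]
  rw [lintegral_lintegral_swap]
  swap
  · exact (Measurable.indicator (by fun_prop) hmeas).aemeasurable
  simp_rw [lintegral_indicator_abs_lt_comp_div]
  rw [lintegral_indicator measurableSet_Ioo, lintegral_mul_const _ (by fun_prop),
    lintegral_Ioo_sq]

lemma lintegral_sphMeasure_inner {k : R3} (hk : ‖k‖ = 1) {φ : ℝ → ENNReal} (hφ : Measurable φ) :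
    ∫⁻ σ : S2, φ ⟪k, σ⟫ ∂sphMeasure
      = ENNReal.ofReal (2 * π) * ∫⁻ x in Ioo (-1) 1, φ x := by
  have hball : ∫⁻ x in Metric.ball (0 : R3) 1, φ ⟪k, ‖x‖⁻¹ • x⟫
      = ∫⁻ x : R3, (Iio 1).indicator (fun s => φ (⟪k, x⟫ / s)) ‖x‖ := by
    rw [← lintegral_indicator measurableSet_ball]
    refine lintegral_congr fun x => ?_
    simp only [indicator, mem_ball_zero_iff, mem_Iio, inner_smul_right, inv_mul_eq_div]
  have hmeas : Measurable (Function.uncurry fun x : ℝ => (Iio 1).indicator fun s => φ (x / s)) :=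
    Measurable.indicator (f := fun q : ℝ × ℝ => φ (q.1 / q.2)) (by fun_prop)
      (measurable_snd measurableSet_Iio)
  rw [sphMeasure, lintegral_toSphere volume (g := fun x => φ ⟪k, x⟫) (by fun_prop), hball,
    lintegral_R3_inner_norm hk hmeas, lintegral_lintegral_Ioi_abs_comp_div hφ,
    finrank_euclideanSpace_fin, mul_left_comm, ← mul_assoc ((3 : ℕ) : ENNReal)]
  have hthird : ((3 : ℕ) : ENNReal) * ENNReal.ofReal (1 / 3) = 1 := by
    exact_mod_cast natCast_mul_ofReal_one_div three_ne_zero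
  rw [hthird, one_mul]

/-! ### The change of variables of a collision -/

section Deflection

variable {E : Type*} [NormedAddCommGroup E] [InnerProductSpace ℝ E]

/-- The velocity change `v - v'` in a collision with relative velocity `z = v - v_*` and scattering
direction `s`. -/
def deflection (s z : E) : E := (2⁻¹ : ℝ) • (z - ‖z‖ • s)

lemma two_mul_norm_deflection_sq {s : E} (hs : ‖s‖ = 1) (z : E) :
    2 * ‖deflection s z‖ ^ 2 = ‖z‖ * (‖z‖ - ⟪z, s⟫) := by
  rw [deflection, norm_smul, mul_pow, norm_sub_sq_real, norm_smul, inner_smul_right, hs, norm_inv,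
    norm_norm, Real.norm_two]
  ring

lemma two_mul_inner_deflection {s : E} (hs : ‖s‖ = 1) (z : E) :
    2 * ⟪deflection s z, s⟫ = ⟪z, s⟫ - ‖z‖ := by
  rw [deflection, inner_smul_left, inner_sub_left, inner_smul_left, real_inner_self_eq_norm_sq, hs,
    conj_trivial, conj_trivial]
  ring

lemma injOn_deflection {s : E} (hs : ‖s‖ = 1) :
    InjOn (deflection s) ({z | ⟪z, s⟫ ≤ 0} \ {0}) := by
  intro z ⟨(hzs : ⟪z, s⟫ ≤ 0), hz⟩ y _ h
  have hz0 : 0 < ‖z‖ := norm_pos_iff.2 hz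
  have hinner : ‖z‖ - ⟪z, s⟫ = ‖y‖ - ⟪y, s⟫ := by
    linarith [two_mul_inner_deflection hs z, two_mul_inner_deflection hs y,
      congrArg (⟪·, s⟫) h]
  have hnorm : ‖z‖ = ‖y‖ := by
    have hsq : ‖z‖ * (‖z‖ - ⟪z, s⟫) = ‖y‖ * (‖z‖ - ⟪z, s⟫) := by
      rw [← two_mul_norm_deflection_sq hs z, h, two_mul_norm_deflection_sq hs y, hinner]
    exact mul_right_cancel₀ (by linarith) hsq
  simp only [deflection, hnorm] at h
  exact sub_left_injective (smul_right_injective E (by norm_num : (2⁻¹ : ℝ) ≠ 0) h)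

lemma hasFDerivAt_norm_of_ne_zero {z : E} (hz : z ≠ 0) :
    HasFDerivAt (fun x : E => ‖x‖) (‖z‖⁻¹ • innerSL ℝ z) z := by
  have h := (hasStrictFDerivAt_norm_sq z).hasFDerivAt.sqrt (by positivity)
  simp only [Real.sqrt_sq (norm_nonneg _)] at h
  refine h.congr_fderiv ?_
  rw [two_smul, ← two_smul ℝ, smul_smul]
  congr 1
  field_simp

lemma hasFDerivAt_deflection (s : E) {z : E} (hz : z ≠ 0) :
    HasFDerivAt (deflection s)
      ((2⁻¹ : ℝ) • (ContinuousLinearMap.id ℝ E - (‖z‖⁻¹ • innerSL ℝ z).smulRight s)) z :=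
  ((hasFDerivAt_id z).sub ((hasFDerivAt_norm_of_ne_zero hz).smul_const s)).const_smul _

variable [FiniteDimensional ℝ E]

lemma det_id_sub_smulRight (L : E →L[ℝ] ℝ) (s : E) :
    (ContinuousLinearMap.id ℝ E - L.smulRight s).det = 1 - L s := by
  have htransvection : ((ContinuousLinearMap.id ℝ E - L.smulRight s : E →L[ℝ] E) : E →ₗ[ℝ] E)
      = LinearMap.transvection (-(L : E →ₗ[ℝ] ℝ)) s := by
    ext x
    simp [LinearMap.transvection, sub_eq_add_neg]
  rw [ContinuousLinearMap.det, htransvection, LinearMap.transvection.det]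
  simp [sub_eq_add_neg]

lemma two_pow_inv_le_abs_det_fderiv_deflection {s z : E} (hzs : ⟪z, s⟫ ≤ 0) :
    (2 ^ Module.finrank ℝ E)⁻¹ ≤ |((2⁻¹ : ℝ) •
      (ContinuousLinearMap.id ℝ E - (‖z‖⁻¹ • innerSL ℝ z).smulRight s)).det| := by
  have hneg : ‖z‖⁻¹ * ⟪z, s⟫ ≤ 0 := mul_nonpos_of_nonneg_of_nonpos (by positivity) hzs
  have hdet : ((2⁻¹ : ℝ) •
      (ContinuousLinearMap.id ℝ E - (‖z‖⁻¹ • innerSL ℝ z).smulRight s)).det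
      = (2 ^ Module.finrank ℝ E)⁻¹ * (1 - ‖z‖⁻¹ * ⟪z, s⟫) := by
    have h := det_id_sub_smulRight (‖z‖⁻¹ • innerSL ℝ z) s
    rw [ContinuousLinearMap.det] at h ⊢
    rw [ContinuousLinearMap.toLinearMap_smul, LinearMap.det_smul, h, inv_pow]
    rfl
  rw [hdet, abs_of_nonneg (mul_nonneg (by positivity) (by linarith))]
  exact le_mul_of_one_le_right (by positivity) (by linarith)

variable [MeasurableSpace E] [BorelSpace E]

lemma lintegral_comp_deflection_le (μ : Measure E) [μ.IsAddHaarMeasure] {s : E} (hs : ‖s‖ = 1)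
    (g : E → ENNReal) :
    ∫⁻ z in {z | ⟪z, s⟫ ≤ 0}, g (deflection s z) ∂μ
      ≤ 2 ^ Module.finrank ℝ E * ∫⁻ y, g y ∂μ := by
  have : Nontrivial E := ⟨s, 0, fun h => by simp [h] at hs⟩
  set H : Set E := {z | ⟪z, s⟫ ≤ 0} \ {0}
  set T' : E → E →L[ℝ] E := fun z =>
    (2⁻¹ : ℝ) • (ContinuousLinearMap.id ℝ E - (‖z‖⁻¹ • innerSL ℝ z).smulRight s)
  have hH : MeasurableSet H :=
    (measurableSet_le (by fun_prop) (by fun_prop)).diff (measurableSet_singleton _)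
  have hHae : H =ᵐ[μ] {z | ⟪z, s⟫ ≤ 0} := sdiff_null_ae_eq_self (by simp)
  have hjacobian : ∀ z ∈ H, 1 ≤ 2 ^ Module.finrank ℝ E * ENNReal.ofReal |(T' z).det| := by
    intro z hz
    rw [← ENNReal.ofReal_ofNat 2, ← ENNReal.ofReal_pow zero_le_two,
      ← ENNReal.ofReal_mul (by positivity), ENNReal.one_le_ofReal]
    exact (inv_le_iff_one_le_mul₀' (by positivity)).1
      (two_pow_inv_le_abs_det_fderiv_deflection hz.1)
  calc ∫⁻ z in {z | ⟪z, s⟫ ≤ 0}, g (deflection s z) ∂μ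
      = ∫⁻ z in H, g (deflection s z) ∂μ := by rw [Measure.restrict_congr_set hHae]
    _ ≤ ∫⁻ z in H, 2 ^ Module.finrank ℝ E *
          (ENNReal.ofReal |(T' z).det| * g (deflection s z)) ∂μ := by
        refine setLIntegral_mono' hH fun z hz => ?_
        rw [← mul_assoc]
        exact le_mul_of_one_le_left (by positivity) (hjacobian z hz)
    _ = 2 ^ Module.finrank ℝ E * ∫⁻ y in deflection s '' H, g y ∂μ := by
        rw [lintegral_const_mul' _ _ (by simp), lintegral_image_eq_lintegral_abs_det_fderiv_mul μ hH
          (fun z hz => (hasFDerivAt_deflection s hz.2).hasFDerivWithinAt) (injOn_deflection hs)]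
    _ ≤ 2 ^ Module.finrank ℝ E * ∫⁻ y, g y ∂μ := by
        gcongr
        exact Measure.restrict_le_self

end Deflection

instance : IsFiniteMeasure sphMeasure := inferInstanceAs (IsFiniteMeasure (Measure.toSphere _))

lemma vOut_eq_sub_deflection (v w : R3) (σ : S2) :
    vOut v w σ = v - deflection (σ : R3) (v - w) := by
  unfold vOut deflection
  module

lemma vOutStar_eq_vOut_neg (v w : R3) (σ : S2) : vOutStar v w σ = vOut v w (-σ) := by
  simp only [vOutStar, vOut, coe_neg_sphere, smul_neg, sub_eq_add_neg]

section Measurability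

variable {α : Type*} [MeasurableSpace α] {v w : α → R3} {σ : α → S2}

@[fun_prop]
lemma measurable_vOut (hv : Measurable v) (hw : Measurable w) (hσ : Measurable σ) :
    Measurable fun a => vOut (v a) (w a) (σ a) := by
  unfold vOut
  fun_prop

@[fun_prop]
lemma measurable_vOutStar (hv : Measurable v) (hw : Measurable w) (hσ : Measurable σ) :
    Measurable fun a => vOutStar (v a) (w a) (σ a) := by
  unfold vOutStar
  fun_prop

@[fun_prop]
lemma measurable_cosAngle (hv : Measurable v) (hw : Measurable w) (hσ : Measurable σ) :
    Measurable fun a => cosAngle (v a) (w a) (σ a) := by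
  unfold cosAngle
  fun_prop

@[fun_prop]
lemma measurable_Bker (γ : ℝ) {b : ℝ → ℝ} (hb : Measurable b) (hv : Measurable v)
    (hw : Measurable w) (hσ : Measurable σ) :
    Measurable fun a => Bker γ b (v a) (w a) (σ a) := by
  unfold Bker
  fun_prop

end Measurability

lemma abs_cosAngle_le_one (v w : R3) (σ : S2) : |cosAngle v w σ| ≤ 1 := by
  refine (abs_real_inner_le_norm _ _).trans ?_
  rw [norm_smul, norm_inv, norm_norm, norm_eq_of_mem_sphere, mul_one]
  exact inv_mul_le_one

lemma image_cos_Ioo : cos '' Ioo 0 π = Ioo (-1) 1 := by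
  ext x
  constructor
  · rintro ⟨θ, ⟨h0, hπ⟩, rfl⟩
    exact ⟨cos_pi ▸ cos_lt_cos_of_nonneg_of_le_pi h0.le le_rfl hπ,
      cos_zero ▸ cos_lt_cos_of_nonneg_of_le_pi le_rfl hπ.le h0⟩
  · rintro ⟨h0, h1⟩
    exact ⟨arccos x, ⟨arccos_pos.2 h1, arccos_lt_pi.2 h0⟩, cos_arccos h0.le h1.le⟩

lemma GradCutoff.even {b : ℝ → ℝ} (hb : GradCutoff b) {x : ℝ} (hx : |x| ≤ 1) : b (-x) = b x := by
  have h := hb.symm (arccos x)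
  rwa [cos_pi_sub, cos_arccos (abs_le.1 hx).1 (abs_le.1 hx).2] at h

lemma GradCutoff.ofReal_Cb {b : ℝ → ℝ} (hb : GradCutoff b) :
    ENNReal.ofReal (Cb b)
      = ENNReal.ofReal (2 * π) * ∫⁻ x in Ioo (-1) 1, ENNReal.ofReal (b x) := by
  have hnonneg : ∀ θ ∈ Ioo 0 π, 0 ≤ b (cos θ) * sin θ := fun θ hθ =>
    mul_nonneg (hb.nonneg _) (sin_pos_of_mem_Ioo hθ).le
  rw [Cb, ENNReal.ofReal_mul (by positivity), intervalIntegral.integral_of_le pi_pos.le,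
    integral_Ioc_eq_integral_Ioo, ofReal_integral_eq_lintegral_ofReal
      ((intervalIntegrable_iff_integrableOn_Ioo_of_le pi_pos.le).1 hb.integrable)
      (ae_restrict_of_forall_mem measurableSet_Ioo hnonneg),
    ← image_cos_Ioo, lintegral_image_eq_lintegral_abs_deriv_mul measurableSet_Ioo
      (fun θ _ => (hasDerivAt_cos θ).hasDerivWithinAt) (injOn_cos.mono Ioo_subset_Icc_self)]
  congr 1
  refine setLIntegral_congr_fun measurableSet_Ioo fun θ hθ => ?_
  have hsin : 0 < sin θ := sin_pos_of_mem_Ioo hθ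
  simp only [abs_neg, abs_of_pos hsin, ← ENNReal.ofReal_mul hsin.le, mul_comm]

lemma GradCutoff.lintegral_cosAngle {b : ℝ → ℝ} (hb : GradCutoff b) {v w : R3} (hvw : v ≠ w) :
    ∫⁻ σ, ENNReal.ofReal (b (cosAngle v w σ)) ∂sphMeasure = ENNReal.ofReal (Cb b) := by
  rw [hb.ofReal_Cb]
  exact lintegral_sphMeasure_inner (norm_smul_inv_norm (𝕜 := ℝ) (sub_ne_zero.2 hvw))
    hb.measurable.ennreal_ofReal

lemma Bker_nonneg {γ : ℝ} {b : ℝ → ℝ} (hb : GradCutoff b) (v w : R3) (σ : S2) :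
    0 ≤ Bker γ b v w σ := mul_nonneg (by positivity) (hb.nonneg _)

lemma Bker_neg {γ : ℝ} {b : ℝ → ℝ} (hb : GradCutoff b) (v w : R3) (σ : S2) :
    Bker γ b v w (-σ) = Bker γ b v w σ := by
  have h : cosAngle v w (-σ) = -cosAngle v w σ := by
    simp only [cosAngle, coe_neg_sphere, inner_neg_right]
  rw [Bker, Bker, h, hb.even (abs_cosAngle_le_one v w σ)]

/-- The product measure `dv_* dσ` on the collision parameters of a particle. -/
abbrev collisionMeasure : Measure (R3 × S2) := (volume : Measure R3).prod sphMeasure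

lemma lintegral_Bker_mul {γ : ℝ} {b : ℝ → ℝ} (hb : GradCutoff b) (v : R3) {F : R3 → ENNReal}
    (hF : Measurable F) :
    ∫⁻ p, ENNReal.ofReal (Bker γ b v p.1 p.2) * F p.1 ∂collisionMeasure
      = ENNReal.ofReal (Cb b) * ∫⁻ w, ENNReal.ofReal (‖v - w‖ ^ γ) * F w := by
  have := hb.measurable
  rw [lintegral_prod _ (by fun_prop), ← lintegral_const_mul _ (by fun_prop)]
  refine lintegral_congr_ae ?_
  filter_upwards [Measure.ae_ne volume v] with w hw
  rw [← hb.lintegral_cosAngle hw.symm, lintegral_mul_const _ (by fun_prop)]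
  simp only [Bker, ENNReal.ofReal_mul (rpow_nonneg (norm_nonneg (v - w)) γ)]
  rw [lintegral_const_mul _ (by fun_prop)]
  ring

lemma lintegral_comp_one_sub_two_mul_sq_le {S : Set ℝ} (hS : MeasurableSet S)
    (hbound : ∀ x ∈ S, 1 / 2 ≤ x ^ 2 ∧ x ^ 2 < 1) (hinj : InjOn (fun x => x ^ 2) S)
    (g : ℝ → ENNReal) :
    ∫⁻ x in S, g (1 - 2 * x ^ 2) ≤ ∫⁻ x in Ioo (-1) 1, g x := by
  have himage : (fun x : ℝ => 1 - 2 * x ^ 2) '' S ⊆ Ioo (-1) 1 := by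
    rintro _ ⟨x, hx, rfl⟩
    constructor <;> linarith [hbound x hx]
  have hderiv (x : ℝ) : HasDerivAt (fun x : ℝ => 1 - 2 * x ^ 2) (-(4 * x)) x :=
    (((hasDerivAt_pow 2 x).const_mul 2).const_sub 1).congr_deriv (by norm_num; ring)
  refine le_trans ?_ (lintegral_mono_set himage)
  rw [lintegral_image_eq_lintegral_abs_deriv_mul hS (fun x _ => (hderiv x).hasDerivWithinAt)
    fun x hx y hy h => hinj hx hy (by simpa using h)]
  refine setLIntegral_mono' hS fun x hx => le_mul_of_one_le_left zero_le ?_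
  have habs : 1 / 2 ≤ |x| := by
    refine (abs_le_of_sq_le_sq' ?_ (abs_nonneg x)).2
    rw [sq_abs]
    linarith [hbound x hx]
  rw [ENNReal.one_le_ofReal, abs_neg, abs_mul, abs_of_pos four_pos]
  linarith

/-- The angular kernel as a function of the cosine `x` of the angle between `v - v'` and `σ`,
for deviation angles `θ ≥ π/2`; there `cos θ = 1 - 2x²`. -/
def halfAngleKernel (b : ℝ → ℝ) : ℝ → ENNReal :=
  {x : ℝ | 1 / 2 ≤ x ^ 2}.indicator fun x => ENNReal.ofReal (b (1 - 2 * x ^ 2))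

lemma halfAngleKernel_neg (b : ℝ → ℝ) (x : ℝ) :
    halfAngleKernel b (-x) = halfAngleKernel b x := by
  simp [halfAngleKernel, indicator]

@[fun_prop]
lemma measurable_halfAngleKernel {b : ℝ → ℝ} (hb : Measurable b) :
    Measurable (halfAngleKernel b) :=
  Measurable.indicator (by fun_prop) (measurableSet_le (by fun_prop) (by fun_prop))

lemma lintegral_halfAngleKernel_le (b : ℝ → ℝ) :
    ∫⁻ x in Ioo (-1) 1, halfAngleKernel b x
      ≤ 2 * ∫⁻ x in Ioo (-1) 1, ENNReal.ofReal (b x) := by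
  let S : Set ℝ := {x : ℝ | 1 / 2 ≤ x ^ 2}
  have hS : MeasurableSet S := measurableSet_le (by fun_prop) (by fun_prop)
  have hsplit : S ∩ Ioo (-1) 1 ⊆ S ∩ Ioo (-1) 0 ∪ S ∩ Ioo 0 1 := by
    rintro x ⟨(h : 1 / 2 ≤ x ^ 2), h₁, h₂⟩
    rcases lt_trichotomy x 0 with hx | rfl | hx
    · exact Or.inl ⟨h, h₁, hx⟩
    · norm_num at h
    · exact Or.inr ⟨h, hx, h₂⟩
  rw [halfAngleKernel, lintegral_indicator hS, Measure.restrict_restrict hS, two_mul]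
  refine (lintegral_mono_set hsplit).trans ((lintegral_union_le _ _ _).trans ?_)
  refine add_le_add (lintegral_comp_one_sub_two_mul_sq_le (hS.inter measurableSet_Ioo)
      (fun x hx => ⟨hx.1, ?_⟩) ?_ fun x => ENNReal.ofReal (b x))
    (lintegral_comp_one_sub_two_mul_sq_le (hS.inter measurableSet_Ioo)
      (fun x hx => ⟨hx.1, ?_⟩) ?_ fun x => ENNReal.ofReal (b x))
  · nlinarith [hx.2.1, hx.2.2]
  · intro x hx y hy (hxy : x ^ 2 = y ^ 2)
    nlinarith [hx.2.2, hy.2.2]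
  · nlinarith [hx.2.1, hx.2.2]
  · intro x hx y hy (hxy : x ^ 2 = y ^ 2)
    nlinarith [hx.2.1, hy.2.1]

section Deflection

variable {E : Type*} [NormedAddCommGroup E] [InnerProductSpace ℝ E] {s z : E}

lemma one_sub_two_mul_cos_deflection_sq (hs : ‖s‖ = 1) (hz : z ≠ 0) (hzs : ⟪z, s⟫ ≤ 0) :
    1 - 2 * ⟪‖deflection s z‖⁻¹ • deflection s z, s⟫ ^ 2 = ⟪‖z‖⁻¹ • z, s⟫ := by
  have hpos : 0 < ‖z‖ := norm_pos_iff.2 hz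
  have hsub : ‖z‖ - ⟪z, s⟫ ≠ 0 := by linarith
  have hnorm : ‖deflection s z‖ ^ 2 = ‖z‖ * (‖z‖ - ⟪z, s⟫) / 2 := by
    linarith [two_mul_norm_deflection_sq hs z]
  have hinner : ⟪deflection s z, s⟫ = (⟪z, s⟫ - ‖z‖) / 2 := by
    linarith [two_mul_inner_deflection hs z]
  rw [inner_smul_left, inner_smul_left, conj_trivial, conj_trivial, mul_pow, inv_pow, hnorm, hinner]
  field_simp
  ring

lemma norm_rpow_le_two_mul_norm_deflection_rpow {γ : ℝ} (hγ₀ : 0 ≤ γ) (hγ₂ : γ ≤ 2)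
    (hs : ‖s‖ = 1) (hzs : ⟪z, s⟫ ≤ 0) : ‖z‖ ^ γ ≤ 2 * ‖deflection s z‖ ^ γ := by
  have hle : ‖z‖ ≤ √2 * ‖deflection s z‖ := by
    refine abs_le_of_sq_le_sq' ?_ (by positivity) |>.2
    rw [mul_pow, Real.sq_sqrt zero_le_two, two_mul_norm_deflection_sq hs]
    nlinarith [norm_nonneg z]
  calc ‖z‖ ^ γ ≤ (√2 * ‖deflection s z‖) ^ γ := by gcongr
    _ = √2 ^ γ * ‖deflection s z‖ ^ γ := mul_rpow (by positivity) (by positivity)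
    _ ≤ √2 ^ (2 : ℝ) * ‖deflection s z‖ ^ γ := by
        gcongr
        exact Real.one_le_sqrt.2 one_le_two
    _ = 2 * ‖deflection s z‖ ^ γ := by rw [rpow_two, Real.sq_sqrt zero_le_two]

lemma kernel_le_deflection_kernel {γ : ℝ} (hγ₀ : 0 ≤ γ) (hγ₂ : γ ≤ 2) (b : ℝ → ℝ)
    (hs : ‖s‖ = 1) (hz : z ≠ 0) (hzs : ⟪z, s⟫ ≤ 0) :
    ENNReal.ofReal (‖z‖ ^ γ * b ⟪‖z‖⁻¹ • z, s⟫)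
      ≤ 2 * ENNReal.ofReal (‖deflection s z‖ ^ γ)
        * halfAngleKernel b ⟪‖deflection s z‖⁻¹ • deflection s z, s⟫ := by
  have hcos := one_sub_two_mul_cos_deflection_sq hs hz hzs
  have hmem : ⟪‖deflection s z‖⁻¹ • deflection s z, s⟫ ∈ {x : ℝ | 1 / 2 ≤ x ^ 2} := by
    have hneg : ⟪‖z‖⁻¹ • z, s⟫ ≤ 0 := by
      rw [inner_smul_left, conj_trivial]
      exact mul_nonpos_of_nonneg_of_nonpos (by positivity) hzs
    rw [mem_ofPred_eq]
    linarith
  rw [halfAngleKernel, indicator_of_mem hmem, hcos, ← ENNReal.ofReal_ofNat 2,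
    ← ENNReal.ofReal_mul zero_le_two, ENNReal.ofReal_mul (by positivity)]
  gcongr
  exact norm_rpow_le_two_mul_norm_deflection_rpow hγ₀ hγ₂ hs hzs

end Deflection

lemma setLIntegral_Bker_mul_vOut_le {γ : ℝ} (hγ₀ : 0 ≤ γ) (hγ₂ : γ ≤ 2) (b : ℝ → ℝ) (v : R3)
    (σ : S2) (F : R3 → ENNReal) :
    ∫⁻ w in {w | ⟪v - w, (σ : R3)⟫ ≤ 0}, ENNReal.ofReal (Bker γ b v w σ) * F (vOut v w σ)
      ≤ 16 * ∫⁻ y, ENNReal.ofReal (‖y‖ ^ γ) * halfAngleKernel b ⟪‖y‖⁻¹ • y, (σ : R3)⟫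
          * F (v - y) := by
  have hσ : ‖(σ : R3)‖ = 1 := norm_eq_of_mem_sphere σ
  have hH : MeasurableSet {z : R3 | ⟪z, (σ : R3)⟫ ≤ 0} :=
    measurableSet_le (by fun_prop) (by fun_prop)
  let g : R3 → ENNReal := fun y =>
    2 * ENNReal.ofReal (‖y‖ ^ γ) * halfAngleKernel b ⟪‖y‖⁻¹ • y, (σ : R3)⟫ * F (v - y)
  calc ∫⁻ w in {w | ⟪v - w, (σ : R3)⟫ ≤ 0}, ENNReal.ofReal (Bker γ b v w σ) * F (vOut v w σ)
      = ∫⁻ z in {z | ⟪z, (σ : R3)⟫ ≤ 0}, ENNReal.ofReal (‖z‖ ^ γ * b ⟪‖z‖⁻¹ • z, (σ : R3)⟫)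
          * F (v - deflection (σ : R3) z) := by
        rw [← lintegral_indicator hH, ← lintegral_indicator
          (measurableSet_le (by fun_prop) (by fun_prop)), ← lintegral_sub_left_eq_self
          ({z : R3 | ⟪z, (σ : R3)⟫ ≤ 0}.indicator _) v]
        simp only [indicator, mem_ofPred_eq, Bker, cosAngle, vOut_eq_sub_deflection]
    _ ≤ ∫⁻ z in {z | ⟪z, (σ : R3)⟫ ≤ 0}, g (deflection (σ : R3) z) := by
        refine lintegral_mono_ae ?_
        filter_upwards [ae_restrict_mem hH, ae_restrict_of_ae (Measure.ae_ne volume 0)]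
          with z hzσ hz
        exact mul_le_mul_left (kernel_le_deflection_kernel hγ₀ hγ₂ b hσ hz hzσ) _
    _ ≤ 2 ^ Module.finrank ℝ R3 * ∫⁻ y, g y := lintegral_comp_deflection_le volume hσ g
    _ = _ := by
        simp only [g, mul_assoc]
        rw [lintegral_const_mul' _ _ ENNReal.ofNat_ne_top, finrank_euclideanSpace_fin, ← mul_assoc]
        norm_num

lemma lintegral_Bker_mul_vOut_mul_vOutStar_slice_le {γ : ℝ} (hγ₀ : 0 ≤ γ) (hγ₂ : γ ≤ 2)
    {b : ℝ → ℝ} (hb : GradCutoff b) (v : R3) (σ : S2) {F : R3 → ENNReal} (hF : ∀ x, F x ≤ 1) :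
    ∫⁻ w, ENNReal.ofReal (Bker γ b v w σ) * (F (vOut v w σ) * F (vOutStar v w σ))
      ≤ 32 * ∫⁻ y, ENNReal.ofReal (‖y‖ ^ γ) * halfAngleKernel b ⟪‖y‖⁻¹ • y, (σ : R3)⟫
          * F (v - y) := by
  have hcover : univ ⊆ {w | ⟪v - w, (σ : R3)⟫ ≤ 0} ∪ {w | ⟪v - w, ((-σ : S2) : R3)⟫ ≤ 0} := by
    intro w _
    simpa only [mem_union, mem_ofPred_eq, coe_neg_sphere, inner_neg_right, neg_nonpos]
      using le_total _ _
  have hforward := setLIntegral_Bker_mul_vOut_le hγ₀ hγ₂ b v σ F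
  have hbackward := setLIntegral_Bker_mul_vOut_le hγ₀ hγ₂ b v (-σ) F
  simp only [Bker_neg hb, ← vOutStar_eq_vOut_neg, coe_neg_sphere, inner_neg_right,
    halfAngleKernel_neg] at hbackward
  rw [← setLIntegral_univ]
  refine (lintegral_mono_set hcover).trans ((lintegral_union_le _ _ _).trans ?_)
  rw [show (32 : ENNReal) = 16 + 16 by norm_num, add_mul]
  refine add_le_add (le_trans ?_ hforward) (le_trans ?_ hbackward)
  · gcongr with w
    exact mul_le_of_le_one_right zero_le (hF _)
  · simp only [coe_neg_sphere, inner_neg_right]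
    gcongr with w
    exact mul_le_of_le_one_left zero_le (hF _)

lemma lintegral_Bker_mul_vOut_mul_vOutStar_le {γ : ℝ} (hγ₀ : 0 ≤ γ) (hγ₂ : γ ≤ 2)
    {b : ℝ → ℝ} (hb : GradCutoff b) (v : R3) {F : R3 → ENNReal} (hFm : Measurable F)
    (hF : ∀ x, F x ≤ 1) :
    ∫⁻ p, ENNReal.ofReal (Bker γ b v p.1 p.2) * (F (vOut v p.1 p.2) * F (vOutStar v p.1 p.2))
        ∂collisionMeasure
      ≤ 64 * ENNReal.ofReal (Cb b) * ∫⁻ w, ENNReal.ofReal (‖v - w‖ ^ γ) * F w := by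
  have := hb.measurable
  have hangle : ∀ᵐ y : R3, ∫⁻ σ : S2, ENNReal.ofReal (‖y‖ ^ γ)
        * halfAngleKernel b ⟪‖y‖⁻¹ • y, (σ : R3)⟫ * F (v - y) ∂sphMeasure
      ≤ 2 * ENNReal.ofReal (Cb b) * (ENNReal.ofReal (‖y‖ ^ γ) * F (v - y)) := by
    filter_upwards [Measure.ae_ne volume 0] with y hy
    have hunit : ‖‖y‖⁻¹ • y‖ = 1 := norm_smul_inv_norm (𝕜 := ℝ) hy
    simp_rw [mul_right_comm (ENNReal.ofReal (‖y‖ ^ γ))]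
    rw [lintegral_const_mul _ (by fun_prop), mul_comm _ (lintegral _ _),
      lintegral_sphMeasure_inner hunit (measurable_halfAngleKernel hb.measurable), hb.ofReal_Cb,
      mul_left_comm 2]
    gcongr
    exact lintegral_halfAngleKernel_le b
  rw [lintegral_prod_symm _ (by fun_prop)]
  refine (lintegral_mono fun σ =>
    lintegral_Bker_mul_vOut_mul_vOutStar_slice_le hγ₀ hγ₂ hb v σ hF).trans ?_
  rw [lintegral_const_mul' _ _ ENNReal.ofNat_ne_top, lintegral_lintegral_swap (by fun_prop)]
  refine (mul_le_mul_right (lintegral_mono_ae hangle) _).trans_eq ?_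
  rw [lintegral_const_mul _ (by fun_prop),
    ← lintegral_sub_left_eq_self (fun w => ENNReal.ofReal (‖v - w‖ ^ γ) * F w) v]
  simp only [sub_sub_cancel, ← mul_assoc]
  norm_num

/-! ### Gain and loss rates -/

/-- The integrand of `gainRate`. -/
def gainIntegrand (γ : ℝ) (b : ℝ → ℝ) (f : R3 → ℝ) (v : R3) (p : R3 × S2) : ℝ :=
  Bker γ b v p.1 p.2 * (f (vOut v p.1 p.2) * f (vOutStar v p.1 p.2) * (1 - f p.1))

/-- The gain rate `∫∫ B f(v') f(v'_*) (1 - f(v_*)) dσ dv_*`, the coefficient of `1 - f(v)` in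
`Q_FD(f,f)(v)`. The loss rate, that is the coefficient of `-f(v)`, is the gain rate of `1 - f`. -/
def gainRate (γ : ℝ) (b : ℝ → ℝ) (f : R3 → ℝ) (v : R3) : ℝ :=
  ∫ p, gainIntegrand γ b f v p ∂collisionMeasure

section Rates

variable {γ : ℝ} {b : ℝ → ℝ} {f : R3 → ℝ} {v : R3}

lemma QFD_one_sub (γ : ℝ) (b : ℝ → ℝ) (f : R3 → ℝ) (v : R3) :
    QFD γ b (1 - f) v = -QFD γ b f v := by
  unfold QFD
  simp only [← integral_neg, Pi.sub_apply, Pi.one_apply, sub_sub_cancel]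
  congr! 4
  ring

lemma QFD_eq_gainRate_sub (hgain : Integrable (gainIntegrand γ b f v) collisionMeasure)
    (hloss : Integrable (gainIntegrand γ b (1 - f) v) collisionMeasure) :
    QFD γ b f v = (1 - f v) * gainRate γ b f v - f v * gainRate γ b (1 - f) v := by
  rw [gainRate, gainRate, ← integral_const_mul, ← integral_const_mul,
    ← integral_sub (hgain.const_mul _) (hloss.const_mul _),
    integral_prod (fun p => (1 - f v) * gainIntegrand γ b f v p
      - f v * gainIntegrand γ b (1 - f) v p) ((hgain.const_mul _).sub (hloss.const_mul _))]
  unfold QFD gainIntegrand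
  simp only [Pi.sub_apply, Pi.one_apply, sub_sub_cancel]
  congr! 4
  ring

lemma gainIntegrand_nonneg (hb : GradCutoff b) (hf : ∀ u, f u ∈ Icc 0 1) (p : R3 × S2) :
    0 ≤ gainIntegrand γ b f v p :=
  mul_nonneg (Bker_nonneg hb _ _ _)
    (mul_nonneg (mul_nonneg (hf _).1 (hf _).1) (sub_nonneg.2 (hf _).2))

lemma gainRate_nonneg (hb : GradCutoff b) (hf : ∀ u, f u ∈ Icc 0 1) (v : R3) :
    0 ≤ gainRate γ b f v :=
  integral_nonneg (gainIntegrand_nonneg hb hf)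

lemma norm_sub_rpow_le (hγ₀ : 0 ≤ γ) (hγ₂ : γ ≤ 2) (v w : R3) :
    ‖v - w‖ ^ γ ≤ 2 * (1 + ‖v‖ ^ 2) * (1 + ‖w‖ ^ 2) := by
  have hrpow : ‖v - w‖ ^ γ ≤ 1 + ‖v - w‖ ^ 2 := by
    rcases le_total ‖v - w‖ 1 with h | h
    · exact (rpow_le_one (norm_nonneg _) h hγ₀).trans (le_add_of_nonneg_right (sq_nonneg _))
    · rw [← rpow_two]
      exact (rpow_le_rpow_of_exponent_le h hγ₂).trans (le_add_of_nonneg_left zero_le_one)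
  have htri : ‖v - w‖ ^ 2 ≤ (‖v‖ + ‖w‖) ^ 2 := by
    gcongr
    exact norm_sub_le v w
  nlinarith [sq_nonneg (‖v‖ - ‖w‖), sq_nonneg (‖v‖ * ‖w‖)]

lemma lintegral_norm_sub_rpow_mul_le (hγ₀ : 0 ≤ γ) (hγ₂ : γ ≤ 2) (hf : MemL1s 2 f) (v : R3) :
    ∫⁻ w, ENNReal.ofReal (‖v - w‖ ^ γ) * ENNReal.ofReal (f w)
      ≤ ENNReal.ofReal (2 * (1 + ‖v‖ ^ 2) * wnorm 2 f) := by
  rw [wnorm, ← integral_const_mul, ofReal_integral_eq_lintegral_ofReal (hf.const_mul _)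
    (ae_of_all _ fun w => by positivity)]
  refine lintegral_mono fun w => ?_
  rw [← ENNReal.ofReal_mul (by positivity), div_self two_ne_zero, rpow_one]
  refine ENNReal.ofReal_le_ofReal ?_
  calc ‖v - w‖ ^ γ * f w ≤ ‖v - w‖ ^ γ * |f w| := by
        gcongr
        exact le_abs_self _
    _ ≤ 2 * (1 + ‖v‖ ^ 2) * (1 + ‖w‖ ^ 2) * |f w| := by
        gcongr
        exact norm_sub_rpow_le hγ₀ hγ₂ v w
    _ = 2 * (1 + ‖v‖ ^ 2) * (|f w| * (1 + ‖w‖ ^ 2)) := by ring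

lemma lintegral_gainIntegrand_le (hγ₀ : 0 ≤ γ) (hγ₂ : γ ≤ 2) (hb : GradCutoff b)
    (hfm : Measurable f) (hf : ∀ u, f u ∈ Icc 0 1) (v : R3) :
    ∫⁻ p, ENNReal.ofReal (gainIntegrand γ b f v p) ∂collisionMeasure
      ≤ 64 * ENNReal.ofReal (Cb b)
        * ∫⁻ w, ENNReal.ofReal (‖v - w‖ ^ γ) * ENNReal.ofReal (f w) := by
  refine le_trans (lintegral_mono fun p => ?_)
    (lintegral_Bker_mul_vOut_mul_vOutStar_le hγ₀ hγ₂ hb v hfm.ennreal_ofReal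
      fun x => ENNReal.ofReal_le_one.2 (hf x).2)
  rw [← ENNReal.ofReal_mul (hf _).1, ← ENNReal.ofReal_mul (Bker_nonneg hb _ _ _)]
  exact ENNReal.ofReal_le_ofReal <| mul_le_mul_of_nonneg_left
    (mul_le_of_le_one_right (mul_nonneg (hf _).1 (hf _).1) (sub_le_self 1 (hf _).1))
    (Bker_nonneg hb _ _ _)

lemma lintegral_gainIntegrand_one_sub_le (hb : GradCutoff b) (hfm : Measurable f)
    (hf : ∀ u, f u ∈ Icc 0 1) (v : R3) :
    ∫⁻ p, ENNReal.ofReal (gainIntegrand γ b (1 - f) v p) ∂collisionMeasure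
      ≤ ENNReal.ofReal (Cb b) * ∫⁻ w, ENNReal.ofReal (‖v - w‖ ^ γ) * ENNReal.ofReal (f w) := by
  rw [← lintegral_Bker_mul hb v hfm.ennreal_ofReal]
  refine lintegral_mono fun p => ?_
  have hf' (u : R3) : 1 - f u ∈ Icc 0 1 := Icc.one_sub_mem (hf u)
  rw [← ENNReal.ofReal_mul (Bker_nonneg hb _ _ _)]
  refine ENNReal.ofReal_le_ofReal (mul_le_mul_of_nonneg_left ?_ (Bker_nonneg hb _ _ _))
  simp only [Pi.sub_apply, Pi.one_apply, sub_sub_cancel]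
  exact mul_le_of_le_one_left (hf _).1 (mul_le_one₀ (hf' _).2 (hf' _).1 (hf' _).2)

/-- The constant `K = 128 C_b ‖f‖_{1,2}` for which the gain and loss rates of `f` are at most
`K (1 + |v|²)`. -/
def rateConst (b : ℝ → ℝ) (f : R3 → ℝ) : ℝ := 128 * Cb b * wnorm 2 f

lemma GradCutoff.Cb_nonneg (hb : GradCutoff b) : 0 ≤ Cb b :=
  mul_nonneg (by positivity) hb.pos.le

lemma lintegral_gainIntegrand_le_rateConst (hγ₀ : 0 ≤ γ) (hγ₂ : γ ≤ 2) (hb : GradCutoff b)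
    (hfm : Measurable f) (hf : ∀ u, f u ∈ Icc 0 1) (hfL : MemL1s 2 f) (v : R3) :
    ∫⁻ p, ENNReal.ofReal (gainIntegrand γ b f v p) ∂collisionMeasure
        ≤ ENNReal.ofReal (rateConst b f * (1 + ‖v‖ ^ 2)) ∧
      ∫⁻ p, ENNReal.ofReal (gainIntegrand γ b (1 - f) v p) ∂collisionMeasure
        ≤ ENNReal.ofReal (rateConst b f * (1 + ‖v‖ ^ 2)) := by
  have hconst : 64 * ENNReal.ofReal (Cb b)
        * ∫⁻ w, ENNReal.ofReal (‖v - w‖ ^ γ) * ENNReal.ofReal (f w)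
      ≤ ENNReal.ofReal (rateConst b f * (1 + ‖v‖ ^ 2)) := by
    have hCb := hb.Cb_nonneg
    have heq : rateConst b f * (1 + ‖v‖ ^ 2)
        = 64 * Cb b * (2 * (1 + ‖v‖ ^ 2) * wnorm 2 f) := by
      rw [rateConst]
      ring
    rw [heq, ENNReal.ofReal_mul (by positivity), ENNReal.ofReal_mul (by positivity),
      ENNReal.ofReal_ofNat]
    gcongr
    exact lintegral_norm_sub_rpow_mul_le hγ₀ hγ₂ hfL v
  refine ⟨(lintegral_gainIntegrand_le hγ₀ hγ₂ hb hfm hf v).trans hconst,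
    (lintegral_gainIntegrand_one_sub_le hb hfm hf v).trans (le_trans ?_ hconst)⟩
  gcongr
  exact le_mul_of_one_le_left zero_le (by norm_num)

lemma measurable_gainIntegrand (hb : GradCutoff b) (hfm : Measurable f) (v : R3) :
    Measurable (gainIntegrand γ b f v) := by
  have := hb.measurable
  unfold gainIntegrand
  fun_prop

lemma integrable_gainIntegrand_and_gainRate_le {C : ℝ} (hC : 0 ≤ C) (hb : GradCutoff b)
    (hfm : Measurable f) (hf : ∀ u, f u ∈ Icc 0 1)
    (hle : ∫⁻ p, ENNReal.ofReal (gainIntegrand γ b f v p) ∂collisionMeasure ≤ ENNReal.ofReal C) :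
    Integrable (gainIntegrand γ b f v) collisionMeasure ∧ gainRate γ b f v ≤ C := by
  have hnonneg := ae_of_all collisionMeasure (gainIntegrand_nonneg (γ := γ) (v := v) hb hf)
  have hmeas := (measurable_gainIntegrand (γ := γ) hb hfm v).aestronglyMeasurable
    (μ := collisionMeasure)
  refine ⟨⟨hmeas, ?_⟩, ?_⟩
  · rw [hasFiniteIntegral_iff_ofReal hnonneg]
    exact hle.trans_lt ENNReal.ofReal_lt_top
  · rw [gainRate, integral_eq_lintegral_of_nonneg_ae hnonneg hmeas]
    exact ENNReal.toReal_le_of_le_ofReal hC hle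

end Rates

/-! ### Mild solutions as flows -/

section TimeRegularity

variable {α : Type*} [MeasurableSpace α]

-- No measurability of `F` is assumed: if `F` is not integrable on `[0, t]`, then already not on
-- some `[0, s]` with `s < t`, and the primitive vanishes on `[s, t]` as a junk value.
lemma continuousWithinAt_Iic_primitive_of_bounded {F : ℝ → ℝ} {C t : ℝ}
    (hF : ∀ τ, 0 ≤ τ → |F τ| ≤ C) (ht : 0 < t) :
    ContinuousWithinAt (fun s => ∫ τ in (0 : ℝ)..s, F τ) (Iic t) t := by
  by_cases hint : IntervalIntegrable F volume 0 t
  · refine (intervalIntegral.continuousOn_primitive_interval' hint left_mem_uIcc t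
      right_mem_uIcc).mono_of_mem_nhdsWithin ?_
    rw [uIcc_of_le ht.le]
    exact Icc_mem_nhdsLE ht
  obtain ⟨s, hs, hnot⟩ : ∃ s ∈ Ico 0 t, ¬ IntervalIntegrable F volume 0 s := by
    contrapose! hint
    obtain ⟨u, -, hu, hlim⟩ := exists_seq_strictMono_tendsto' ht
    rw [intervalIntegrable_iff_integrableOn_Ioc_of_le ht.le]
    have hint' (n : ℕ) : IntegrableOn F (Ioc 0 (u n)) :=
      (intervalIntegrable_iff_integrableOn_Ioc_of_le (hu n).1.le).1
        (hint _ (Ioo_subset_Ico_self (hu n)))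
    refine integrableOn_Ioc_of_intervalIntegral_norm_bounded_right (I := C * t) hint'
      hlim (Filter.Eventually.of_forall fun n => ?_)
    have hC : 0 ≤ C := (abs_nonneg _).trans (hF 0 le_rfl)
    refine (le_abs_self _).trans ((norm_setIntegral_le_of_norm_le_const measure_Ioc_lt_top
      fun τ hτ => (norm_norm (F τ)).trans_le (hF τ hτ.1.le)).trans ?_)
    rw [Real.volume_real_Ioc_of_le (hu n).1.le, sub_zero]
    exact mul_le_mul_of_nonneg_left (hu n).2.le hC
  have hzero : ∀ r ∈ Icc s t, ∫ τ in (0 : ℝ)..r, F τ = 0 := fun r hr =>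
    intervalIntegral.integral_undef fun h => hnot <| h.mono_set <|
      uIcc_subset_uIcc_left ⟨by simp [hs.1], by simp [hr.1]⟩
  exact continuousWithinAt_const.congr_of_eventuallyEq
    (Filter.eventually_of_mem (Icc_mem_nhdsLE hs.2) hzero) (hzero t ⟨hs.2.le, le_rfl⟩)

lemma exists_measurable_eq_of_continuousWithinAt_Iic {f : ℝ → α → ℝ} (hf : ∀ t, Measurable (f t)) :
    ∃ h : ℝ × α → ℝ, Measurable h ∧
      ∀ t, 0 ≤ t → ∀ a, ContinuousWithinAt (fun s => f s a) (Iic t) t → h (t, a) = f t a := by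
  have hstep (n : ℕ) : Measurable fun y : ℝ × α => f (⌊y.1 * n⌋₊ / n) y.2 :=
    (measurable_from_prod_countable_right (f := fun z : ℕ × α => f (z.1 / n) z.2)
      fun k => hf (k / n)).comp
      ((Nat.measurable_floor.comp (measurable_fst.mul_const _)).prodMk measurable_snd)
  refine ⟨_, Measurable.limsup hstep, fun t ht a hcont => Filter.Tendsto.limsup_eq ?_⟩
  refine hcont.tendsto.comp (tendsto_nhdsWithin_iff.2
    ⟨(tendsto_nat_floor_mul_div_atTop ht).comp tendsto_natCast_atTop_atTop, ?_⟩)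
  exact Filter.Eventually.of_forall fun n =>
    div_le_of_le_mul₀ n.cast_nonneg ht (Nat.floor_le (by positivity))

end TimeRegularity

lemma ae_ae_sub_comp {G α : Type*} [AddCommGroup G] [MeasurableSpace G] [MeasurableAdd₂ G]
    [MeasurableNeg G] [MeasurableSpace α]
    {μ : Measure G} [SFinite μ] [μ.IsAddLeftInvariant] [μ.IsNegInvariant] {ν : Measure α}
    [SFinite ν] {T : G × α → G} (hT : Measurable T) {P : G → Prop} (hP : ∀ᵐ u ∂μ, P u) :
    ∀ᵐ v ∂μ, ∀ᵐ p ∂μ.prod ν, P (v - T (v - p.1, p.2)) := by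
  let N := toMeasurable μ {u | ¬ P u}
  have hN : ∀ᵐ u ∂μ, u ∉ N := by
    rw [ae_iff]
    simpa only [N, not_not, ofPred_mem_eq, measure_toMeasurable] using ae_iff.1 hP
  have hPN : ∀ u ∉ N, P u := fun u hu => by
    by_contra h
    exact hu (subset_toMeasurable _ _ h)
  have hswap : ∀ᵐ v ∂μ, ∀ᵐ p ∂μ.prod ν, v - T p ∉ N := by
    rw [Measure.ae_ae_comm]
    · exact ae_of_all _ fun p =>
        (measurePreserving_sub_right μ (T p)).quasiMeasurePreserving.ae hN
    · exact (measurable_fst.sub (hT.comp measurable_snd)) (measurableSet_toMeasurable _ _).compl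
  filter_upwards [hswap] with v hv
  have := ((Measure.measurePreserving_sub_left μ v).prod
    (MeasurePreserving.id ν)).quasiMeasurePreserving.ae hv
  exact this.mono fun p hp => hPN _ hp

lemma measurable_deflection_sphere {s : S2 → S2} (hs : Measurable s) :
    Measurable fun p : R3 × S2 => deflection (s p.2 : R3) p.1 := by
  unfold deflection
  fun_prop

lemma ae_ae_collision {P : R3 → Prop} (hP : ∀ᵐ u, P u) :
    ∀ᵐ v, ∀ᵐ p ∂collisionMeasure, P (vOut v p.1 p.2) ∧ P (vOutStar v p.1 p.2) ∧ P p.1 := by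
  filter_upwards [ae_ae_sub_comp (ν := sphMeasure) (measurable_deflection_sphere measurable_id) hP,
    ae_ae_sub_comp (ν := sphMeasure) (measurable_deflection_sphere (s := Neg.neg) (by fun_prop)) hP]
    with v hout hstar
  filter_upwards [hout, hstar, Measure.quasiMeasurePreserving_fst.ae hP] with p hp hp' hp₁
  refine ⟨?_, ?_, hp₁⟩
  · rwa [vOut_eq_sub_deflection]
  · rwa [vOutStar_eq_vOut_neg, vOut_eq_sub_deflection]

lemma QFD_congr_ae {γ : ℝ} {b : ℝ → ℝ} {f g : R3 → ℝ} {v : R3} (hv : f v = g v)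
    (h : ∀ᵐ p ∂collisionMeasure, f (vOut v p.1 p.2) = g (vOut v p.1 p.2) ∧
      f (vOutStar v p.1 p.2) = g (vOutStar v p.1 p.2) ∧ f p.1 = g p.1) :
    QFD γ b f v = QFD γ b g v := by
  refine integral_congr_ae ?_
  filter_upwards [Measure.ae_ae_of_ae_prod h] with w hw
  refine integral_congr_ae ?_
  filter_upwards [hw] with σ hσ
  rw [hv, hσ.1, hσ.2.1, hσ.2.2]

lemma measurable_QFD_time {γ : ℝ} {b : ℝ → ℝ} (hb : Measurable b) {h : ℝ × R3 → ℝ}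
    (hh : Measurable h) (v : R3) : Measurable fun τ => QFD γ b (fun u => h (τ, u)) v := by
  refine (StronglyMeasurable.integral_prod_right ?_).measurable
  refine StronglyMeasurable.integral_prod_right ?_
  refine Measurable.stronglyMeasurable ?_
  fun_prop

/-- The properties of a solution of the Boltzmann–Fermi–Dirac equation that the propagation of
lower bounds relies on: the equation holds in integrated form, and the gain and loss rates at `v`
are at most `K (1 + |v|²)`. Unlike `IsFDSolution`, they are invariant under `f ↦ 1 - f`. -/
structure IsFDFlow (γ : ℝ) (b : ℝ → ℝ) (K : ℝ) (f : ℝ → R3 → ℝ) : Prop where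
  mem_Icc : ∀ t, 0 ≤ t → ∀ v, f t v ∈ Icc 0 1
  integrable_gain : ∀ t, 0 ≤ t → ∀ v, Integrable (gainIntegrand γ b (f t) v) collisionMeasure
  integrable_loss : ∀ t, 0 ≤ t → ∀ v, Integrable (gainIntegrand γ b (1 - f t) v) collisionMeasure
  gainRate_le : ∀ t, 0 ≤ t → ∀ v, gainRate γ b (f t) v ≤ K * (1 + ‖v‖ ^ 2)
  lossRate_le : ∀ t, 0 ≤ t → ∀ v, gainRate γ b (1 - f t) v ≤ K * (1 + ‖v‖ ^ 2)
  intervalIntegrable : ∀ᵐ v, ∀ s t, 0 ≤ s → s ≤ t →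
    IntervalIntegrable (fun τ => QFD γ b (f τ) v) volume s t
  integral_eq : ∀ᵐ v, ∀ s t, 0 ≤ s → s ≤ t → ∫ τ in s..t, QFD γ b (f τ) v = f t v - f s v

lemma IsFDFlow.one_sub {γ : ℝ} {b : ℝ → ℝ} {K : ℝ} {f : ℝ → R3 → ℝ} (hf : IsFDFlow γ b K f) :
    IsFDFlow γ b K (1 - f) where
  mem_Icc t ht v := Icc.one_sub_mem (hf.mem_Icc t ht v)
  integrable_gain := hf.integrable_loss
  integrable_loss t ht v := by
    simpa only [Pi.sub_apply, Pi.one_apply, sub_sub_cancel] using hf.integrable_gain t ht v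
  gainRate_le := hf.lossRate_le
  lossRate_le t ht v := by
    simpa only [Pi.sub_apply, Pi.one_apply, sub_sub_cancel] using hf.gainRate_le t ht v
  intervalIntegrable := by
    filter_upwards [hf.intervalIntegrable] with v hv s t hs hst
    simp only [Pi.sub_apply, Pi.one_apply, QFD_one_sub]
    exact (hv s t hs hst).neg
  integral_eq := by
    filter_upwards [hf.integral_eq] with v hv s t hs hst
    simp only [Pi.sub_apply, Pi.one_apply, QFD_one_sub, intervalIntegral.integral_neg,
      hv s t hs hst]
    ring

lemma abs_QFD_le_of_gainRate_le {γ : ℝ} {b : ℝ → ℝ} (hb : GradCutoff b) {f : R3 → ℝ} {v : R3}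
    {C : ℝ} (hf : ∀ u, f u ∈ Icc 0 1) (hgi : Integrable (gainIntegrand γ b f v) collisionMeasure)
    (hli : Integrable (gainIntegrand γ b (1 - f) v) collisionMeasure)
    (hg : gainRate γ b f v ≤ C) (hl : gainRate γ b (1 - f) v ≤ C) : |QFD γ b f v| ≤ C := by
  have hg₀ := gainRate_nonneg (γ := γ) hb hf v
  have hl₀ := gainRate_nonneg (γ := γ) (f := 1 - f) hb (fun u => Icc.one_sub_mem (hf u)) v
  obtain ⟨h₀, h₁⟩ := hf v
  rw [QFD_eq_gainRate_sub hgi hli, abs_le]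
  constructor <;> nlinarith

section Solution

variable {γ : ℝ} {b : ℝ → ℝ} {f₀ : R3 → ℝ} {f : ℝ → R3 → ℝ}

lemma wnorm_two_eq {g : R3 → ℝ} (hgm : Measurable g) (hg : ∀ v, 0 ≤ g v) (hgL : MemL1s 2 g) :
    wnorm 2 g = (∫ v, g v) + ∫ v, g v * ‖v‖ ^ 2 := by
  have hsplit (v : R3) : |g v| * (1 + ‖v‖ ^ 2) ^ ((2 : ℝ) / 2) = g v + g v * ‖v‖ ^ 2 := by
    rw [div_self two_ne_zero, rpow_one, abs_of_nonneg (hg v)]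
    ring
  have hsum : Integrable fun v => g v + g v * ‖v‖ ^ 2 := by
    simpa only [MemL1s, hsplit] using hgL
  have hnonneg (v : R3) : 0 ≤ g v * ‖v‖ ^ 2 := mul_nonneg (hg v) (sq_nonneg _)
  rw [wnorm, ← integral_add]
  · simp only [hsplit]
  · exact hsum.mono' hgm.aestronglyMeasurable (ae_of_all _ fun v => by
      rw [Real.norm_of_nonneg (hg v)]
      exact le_add_of_nonneg_right (hnonneg v))
  · exact hsum.mono' (by fun_prop) (ae_of_all _ fun v => by
      rw [Real.norm_of_nonneg (hnonneg v)]
      exact le_add_of_nonneg_left (hg v))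

lemma IsFDSolution.wnorm_two_eq_initial (hf : IsFDSolution γ b f₀ f) {t : ℝ} (ht : 0 ≤ t) :
    wnorm 2 (f t) = wnorm 2 (f 0) := by
  rw [wnorm_two_eq (hf.measurable t) (hf.nonneg t ht) (hf.memL12 t ht),
    wnorm_two_eq (hf.measurable 0) (hf.nonneg 0 le_rfl) (hf.memL12 0 le_rfl), hf.mass t ht,
    hf.energy t ht, hf.mass 0 le_rfl, hf.energy 0 le_rfl]

lemma IsFDSolution.mem_Icc (hf : IsFDSolution γ b f₀ f) {t : ℝ} (ht : 0 ≤ t) (v : R3) :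
    f t v ∈ Icc 0 1 := ⟨hf.nonneg t ht v, hf.le_one t ht v⟩

lemma IsFDSolution.gain_loss_bounds (hγ₀ : 0 ≤ γ) (hγ₂ : γ ≤ 2) (hb : GradCutoff b)
    (hf : IsFDSolution γ b f₀ f) {t : ℝ} (ht : 0 ≤ t) (v : R3) :
    (Integrable (gainIntegrand γ b (f t) v) collisionMeasure ∧
      gainRate γ b (f t) v ≤ rateConst b (f 0) * (1 + ‖v‖ ^ 2)) ∧
    Integrable (gainIntegrand γ b (1 - f t) v) collisionMeasure ∧
      gainRate γ b (1 - f t) v ≤ rateConst b (f 0) * (1 + ‖v‖ ^ 2) := by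
  obtain ⟨hgain, hloss⟩ := lintegral_gainIntegrand_le_rateConst hγ₀ hγ₂ hb (hf.measurable t)
    (hf.mem_Icc ht) (hf.memL12 t ht) v
  have hK : 0 ≤ rateConst b (f t) * (1 + ‖v‖ ^ 2) := by
    have := hb.Cb_nonneg
    have : 0 ≤ wnorm 2 (f t) := integral_nonneg fun v => by positivity
    rw [rateConst]
    positivity
  rw [rateConst, ← hf.wnorm_two_eq_initial ht]
  exact ⟨integrable_gainIntegrand_and_gainRate_le hK hb (hf.measurable t) (hf.mem_Icc ht) hgain,
    integrable_gainIntegrand_and_gainRate_le hK hb (measurable_const.sub (hf.measurable t))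
      (fun u => Icc.one_sub_mem (hf.mem_Icc ht u)) hloss⟩

lemma IsFDSolution.abs_QFD_le (hγ₀ : 0 ≤ γ) (hγ₂ : γ ≤ 2) (hb : GradCutoff b)
    (hf : IsFDSolution γ b f₀ f) {t : ℝ} (ht : 0 ≤ t) (v : R3) :
    |QFD γ b (f t) v| ≤ rateConst b (f 0) * (1 + ‖v‖ ^ 2) := by
  obtain ⟨⟨hgi, hg⟩, hli, hl⟩ := hf.gain_loss_bounds hγ₀ hγ₂ hb ht v
  exact abs_QFD_le_of_gainRate_le hb (hf.mem_Icc ht) hgi hli hg hl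

lemma IsFDSolution.exists_measurable_eq (hγ₀ : 0 ≤ γ) (hγ₂ : γ ≤ 2) (hb : GradCutoff b)
    (hf : IsFDSolution γ b f₀ f) :
    ∃ h : ℝ × R3 → ℝ, Measurable h ∧ ∀ᵐ v, ∀ t, 0 < t → f t v = h (t, v) := by
  obtain ⟨h, hh, heq⟩ := exists_measurable_eq_of_continuousWithinAt_Iic hf.measurable
  obtain ⟨Z, hZ, hmild⟩ := hf.mild
  refine ⟨h, hh, ?_⟩
  filter_upwards [measure_eq_zero_iff_ae_notMem.1 hZ] with v hv t ht
  refine (heq t ht.le v ?_).symm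
  refine (continuousWithinAt_const.add (continuousWithinAt_Iic_primitive_of_bounded
    (fun τ hτ => hf.abs_QFD_le hγ₀ hγ₂ hb hτ v) ht)).congr_of_eventuallyEq ?_ (hmild t ht.le v hv)
  filter_upwards [Ioc_mem_nhdsLE ht] with s hs using hmild s hs.1.le v hv

lemma IsFDSolution.ae_intervalIntegrable_QFD (hγ₀ : 0 ≤ γ) (hγ₂ : γ ≤ 2) (hb : GradCutoff b)
    (hf : IsFDSolution γ b f₀ f) :
    ∀ᵐ v, ∀ s t, 0 ≤ s → s ≤ t → IntervalIntegrable (fun τ => QFD γ b (f τ) v) volume s t := by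
  obtain ⟨h, hh, heq⟩ := hf.exists_measurable_eq hγ₀ hγ₂ hb
  filter_upwards [heq, ae_ae_collision heq] with v hv hcoll s t hs hst
  have hQ : ∀ τ ∈ Ioc s t, QFD γ b (fun u => h (τ, u)) v = QFD γ b (f τ) v := fun τ hτ =>
    have hτ₀ : 0 < τ := hs.trans_lt hτ.1
    QFD_congr_ae (hv τ hτ₀).symm <| hcoll.mono fun p hp =>
      ⟨(hp.1 τ hτ₀).symm, (hp.2.1 τ hτ₀).symm, (hp.2.2 τ hτ₀).symm⟩
  rw [intervalIntegrable_iff_integrableOn_Ioc_of_le hst]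
  refine Integrable.of_bound ?_ (rateConst b (f 0) * (1 + ‖v‖ ^ 2)) ?_
  · exact (measurable_QFD_time hb.measurable hh v).aestronglyMeasurable.congr
      (ae_restrict_of_forall_mem measurableSet_Ioc hQ)
  · exact ae_restrict_of_forall_mem measurableSet_Ioc fun τ hτ =>
      hf.abs_QFD_le hγ₀ hγ₂ hb (hs.trans hτ.1.le) v

lemma IsFDSolution.isFDFlow (hγ₀ : 0 ≤ γ) (hγ₂ : γ ≤ 2) (hb : GradCutoff b)
    (hf : IsFDSolution γ b f₀ f) : IsFDFlow γ b (rateConst b (f 0)) f where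
  mem_Icc _ ht := hf.mem_Icc ht
  integrable_gain _ ht v := (hf.gain_loss_bounds hγ₀ hγ₂ hb ht v).1.1
  integrable_loss _ ht v := (hf.gain_loss_bounds hγ₀ hγ₂ hb ht v).2.1
  gainRate_le _ ht v := (hf.gain_loss_bounds hγ₀ hγ₂ hb ht v).1.2
  lossRate_le _ ht v := (hf.gain_loss_bounds hγ₀ hγ₂ hb ht v).2.2
  intervalIntegrable := hf.ae_intervalIntegrable_QFD hγ₀ hγ₂ hb
  integral_eq := by
    obtain ⟨Z, hZ, hmild⟩ := hf.mild
    filter_upwards [measure_eq_zero_iff_ae_notMem.1 hZ, hf.ae_intervalIntegrable_QFD hγ₀ hγ₂ hb]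
      with v hv hint s t hs hst
    rw [hmild s hs v hv, hmild t (hs.trans hst) v hv, add_sub_add_left_eq_sub,
      intervalIntegral.integral_interval_sub_left (hint 0 t le_rfl (hs.trans hst))
        (hint 0 s le_rfl hs)]

end Solution

section IntegralInequality

variable {u : ℝ → ℝ} {α β a c : ℝ}

open Topology in
lemma neg_gronwallBound_le_of_integral_le_sub (hac : a ≤ c) (hu : ContinuousOn u (Icc a c))
    (h : ∀ x y, a ≤ x → x ≤ y → y ≤ c → ∫ τ in x..y, (α - β * u τ) ≤ u y - u x) :
    -gronwallBound (-u a) (-β) (-α) (c - a) ≤ u c := by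
  rw [neg_le]
  refine le_gronwallBound_of_liminf_deriv_right_le (f := -u) (f' := fun x => -(α - β * u x))
    hu.neg (fun x hx r hr => ?_) le_rfl (fun x _ => ?_) c ⟨hac, le_rfl⟩
  · have hcont : ContinuousOn (fun τ => α - β * u τ) (Icc a c) := by fun_prop
    have hright : 𝓝[>] x ≤ 𝓝[Icc a c] x :=
      nhdsWithin_le_of_mem (Filter.mem_of_superset (Ioc_mem_nhdsGT hx.2)
        fun y hy => ⟨hx.1.trans hy.1.le, hy.2⟩)
    have hprim : HasDerivWithinAt (fun z => ∫ τ in x..z, (α - β * u τ)) (α - β * u x)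
        (Ici x) x :=
      intervalIntegral.integral_hasDerivWithinAt_right (t := Ioi x) (.refl)
        ((hcont.stronglyMeasurableAtFilter_nhdsWithin measurableSet_Icc x).filter_mono hright)
        ((hcont x (Ico_subset_Icc_self hx)).mono_left hright)
    refine ((hprim.neg.liminf_right_slope_le hr).and_eventually (Ioc_mem_nhdsGT hx.2)).mono ?_
    rintro z ⟨hz, hxz, hzc⟩
    refine lt_of_le_of_lt (mul_le_mul_of_nonneg_left ?_ (inv_nonneg.2 (sub_nonneg.2 hxz.le))) hz
    have := h x z hx.1 hxz.le hzc
    simp only [Pi.neg_apply, intervalIntegral.integral_same, vsub_eq_sub, neg_zero, sub_zero]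
    linarith
  · simp only [Pi.neg_apply]
    linarith

lemma mul_exp_le_of_integral_le_sub (hac : a ≤ c) (hu : ContinuousOn u (Icc a c))
    (h : ∀ x y, a ≤ x → x ≤ y → y ≤ c → ∫ τ in x..y, -(β * u τ) ≤ u y - u x) :
    u a * exp (-(β * (c - a))) ≤ u c := by
  have := neg_gronwallBound_le_of_integral_le_sub (α := 0) (β := β) hac hu
    (by simpa only [zero_sub] using h)
  rwa [neg_zero, gronwallBound_ε0, neg_mul, neg_neg, neg_mul] at this

lemma div_one_add_le_of_integral_le_sub (hα : 0 ≤ α) (hβ : 0 ≤ β) (hac : a ≤ c) (ha : 0 ≤ u a)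
    (hu : ContinuousOn u (Icc a c))
    (h : ∀ x y, a ≤ x → x ≤ y → y ≤ c → ∫ τ in x..y, (α - β * u τ) ≤ u y - u x) :
    α * (c - a) / (1 + β * (c - a)) ≤ u c := by
  refine le_trans ?_ (neg_gronwallBound_le_of_integral_le_sub hac hu h)
  have hs : 0 ≤ c - a := sub_nonneg.2 hac
  rcases hβ.eq_or_lt with rfl | hβ
  · rw [neg_zero, gronwallBound_K0]
    simp only [zero_mul, add_zero, div_one]
    linarith
  have hexp : exp (-(β * (c - a))) ≤ (1 + β * (c - a))⁻¹ := by
    rw [exp_neg]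
    gcongr
    linarith [add_one_le_exp (β * (c - a))]
  simp only [gronwallBound_of_K_ne_0 (neg_ne_zero.2 hβ.ne'), neg_div_neg_eq, neg_mul β]
  calc α * (c - a) / (1 + β * (c - a)) = α / β * (1 - (1 + β * (c - a))⁻¹) := by
        field_simp
        ring
    _ ≤ α / β * (1 - exp (-(β * (c - a)))) := by gcongr
    _ ≤ u a * exp (-(β * (c - a))) + α / β * (1 - exp (-(β * (c - a)))) :=
        le_add_of_nonneg_left (by positivity)
    _ = -(-u a * exp (-(β * (c - a))) + α / β * (exp (-(β * (c - a))) - 1)) := by ring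

end IntegralInequality

section Flow

variable {γ : ℝ} {b : ℝ → ℝ} {K : ℝ} {f : ℝ → R3 → ℝ}

lemma IsFDFlow.ae_continuousOn (hf : IsFDFlow γ b K f) :
    ∀ᵐ v, ∀ s t, 0 ≤ s → s ≤ t → ContinuousOn (fun τ => f τ v) (Icc s t) := by
  filter_upwards [hf.intervalIntegrable, hf.integral_eq] with v hint heq s t hs hst
  have hprim := intervalIntegral.continuousOn_primitive_interval' (hint s t hs hst) left_mem_uIcc
  rw [uIcc_of_le hst] at hprim
  refine (hprim.const_add (f s v)).congr fun τ hτ => ?_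
  simp only [heq s τ hs hτ.1, add_sub_cancel]

lemma IsFDFlow.le_QFD (hf : IsFDFlow γ b K f) {t : ℝ} (ht : 0 ≤ t) {v : R3}
    {α : ℝ} (hα : α ≤ gainRate γ b (f t) v) :
    α - (α + K * (1 + ‖v‖ ^ 2)) * f t v ≤ QFD γ b (f t) v := by
  rw [QFD_eq_gainRate_sub (hf.integrable_gain t ht v) (hf.integrable_loss t ht v)]
  have hgain := mul_le_mul_of_nonneg_left hα (sub_nonneg.2 (hf.mem_Icc t ht v).2)
  have hloss := mul_le_mul_of_nonneg_left (hf.lossRate_le t ht v) (hf.mem_Icc t ht v).1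
  linarith

lemma IsFDFlow.ae_integral_le_sub (hf : IsFDFlow γ b K f) :
    ∀ᵐ v, ∀ (α s t : ℝ), 0 ≤ s → s ≤ t → (∀ τ ∈ Icc s t, α ≤ gainRate γ b (f τ) v) →
      ∫ τ in s..t, (α - (α + K * (1 + ‖v‖ ^ 2)) * f τ v) ≤ f t v - f s v := by
  filter_upwards [hf.ae_continuousOn, hf.intervalIntegrable, hf.integral_eq]
    with v hcont hint heq α s t hs hst hα
  rw [← heq s t hs hst]
  refine intervalIntegral.integral_mono_on hst ?_ (hint s t hs hst) fun τ hτ =>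
    hf.le_QFD (hs.trans hτ.1) (hα τ hτ)
  have := hcont s t hs hst
  exact ContinuousOn.intervalIntegrable_of_Icc hst (by fun_prop)

lemma IsFDFlow.ae_mul_exp_le (hb : GradCutoff b) (hf : IsFDFlow γ b K f) :
    ∀ᵐ v, ∀ s t, 0 ≤ s → s ≤ t → f s v * exp (-(K * (1 + ‖v‖ ^ 2) * (t - s))) ≤ f t v := by
  filter_upwards [hf.ae_continuousOn, hf.ae_integral_le_sub] with v hcont hle s t hs hst
  refine mul_exp_le_of_integral_le_sub hst (hcont s t hs hst) fun x y hx hxy _ => ?_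
  simpa only [zero_sub, zero_add] using hle 0 x y (hs.trans hx) hxy fun τ hτ =>
    gainRate_nonneg hb (hf.mem_Icc τ (hs.trans (hx.trans hτ.1))) v

lemma IsFDFlow.ae_div_le_of_le_gainRate (hf : IsFDFlow γ b K f) :
    ∀ᵐ v, ∀ (α s t : ℝ), 0 ≤ α → 0 ≤ s → s ≤ t → t ≤ s + 1 →
      (∀ τ ∈ Icc s t, α ≤ gainRate γ b (f τ) v) →
      α * (t - s) / (1 + 2 * (K * (1 + ‖v‖ ^ 2))) ≤ f t v := by
  filter_upwards [hf.ae_continuousOn, hf.ae_integral_le_sub]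
    with v hcont hle α s t hα₀ hs hst hts hα
  have hαK : α ≤ K * (1 + ‖v‖ ^ 2) :=
    (hα s ⟨le_rfl, hst⟩).trans (hf.gainRate_le s hs v)
  refine le_trans ?_ (div_one_add_le_of_integral_le_sub hα₀
    (add_nonneg hα₀ (hα₀.trans hαK)) hst (hf.mem_Icc s hs v).1 (hcont s t hs hst)
    fun x y hx hxy hy => hle α x y (hs.trans hx) hxy fun τ hτ =>
      hα τ ⟨hx.trans hτ.1, hτ.2.trans hy⟩)
  have hlen : 0 ≤ t - s := sub_nonneg.2 hst
  have hden : (α + K * (1 + ‖v‖ ^ 2)) * (t - s)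
      ≤ (K * (1 + ‖v‖ ^ 2) + K * (1 + ‖v‖ ^ 2)) * 1 := by
    have := hα₀.trans hαK
    gcongr
    linarith
  have := mul_nonneg (add_nonneg hα₀ (hα₀.trans hαK)) hlen
  exact div_le_div_of_nonneg_left (by positivity) (by linarith) (by linarith)

end Flow

/-! ### Right-angle collisions -/

section RightAngleCollision

variable {E : Type*} [NormedAddCommGroup E] [InnerProductSpace ℝ E]

lemma norm_midpoint_add_smul_sq {s : E} (hs : ‖s‖ = 1) (V W : E) :
    ‖(2⁻¹ : ℝ) • (V + W) + (‖V - W‖ / 2) • s‖ ^ 2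
      = (‖V‖ ^ 2 + ‖W‖ ^ 2) / 2 + ‖V - W‖ / 2 * ⟪V - W, s⟫ + ‖V - W‖ * ⟪W, s⟫ := by
  have hpar := parallelogram_law_with_norm ℝ V W
  rw [norm_add_sq_real, norm_smul, norm_smul, hs, inner_smul_left, inner_smul_right,
    inner_add_left, inner_sub_left]
  simp only [norm_inv, Real.norm_ofNat, norm_div, norm_norm, conj_trivial]
  linarith

lemma norm_midpoint_add_smul_le {V W s : E} {r κ : ℝ} (hs : ‖s‖ = 1) (hκ : 0 < κ)
    (hr : 10 * κ ≤ r) (hV : ‖V‖ ≤ √2 * (r - κ)) (hW : ‖W‖ ≤ κ / 4)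
    (hcos : |⟪V - W, s⟫| ≤ ‖V - W‖ * (κ / (8 * r))) :
    ‖(2⁻¹ : ℝ) • (V + W) + (‖V - W‖ / 2) • s‖ ≤ r := by
  have hr₀ : 0 < r := by linarith
  have hVsq : ‖V‖ ^ 2 ≤ 2 * (r - κ) ^ 2 := by
    calc ‖V‖ ^ 2 ≤ (√2 * (r - κ)) ^ 2 := by gcongr
      _ = 2 * (r - κ) ^ 2 := by rw [mul_pow, Real.sq_sqrt zero_le_two]
  have hWsq : ‖W‖ ^ 2 ≤ (κ / 4) ^ 2 := by gcongr
  have hVW : ‖V - W‖ ≤ 2 * r := by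
    have h2 : √2 ≤ 3 / 2 := Real.sqrt_le_iff.2 (by norm_num)
    calc ‖V - W‖ ≤ ‖V‖ + ‖W‖ := norm_sub_le V W
      _ ≤ 3 / 2 * (r - κ) + κ / 4 := by
          gcongr
          exact hV.trans (mul_le_mul_of_nonneg_right h2 (by linarith))
      _ ≤ 2 * r := by linarith
  have hscatter : ‖V - W‖ / 2 * ⟪V - W, s⟫ ≤ r * κ / 4 := by
    calc ‖V - W‖ / 2 * ⟪V - W, s⟫ ≤ ‖V - W‖ / 2 * (‖V - W‖ * (κ / (8 * r))) := by
          gcongr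
          exact (le_abs_self _).trans hcos
      _ ≤ (2 * r) / 2 * ((2 * r) * (κ / (8 * r))) := by gcongr
      _ = r * κ / 4 := by
          field_simp
          ring
  have hshift : ‖V - W‖ * ⟪W, s⟫ ≤ r * κ / 2 := by
    calc ‖V - W‖ * ⟪W, s⟫ ≤ ‖V - W‖ * (κ / 4) := by
          gcongr
          exact (real_inner_le_norm W s).trans (by rwa [hs, mul_one])
      _ ≤ (2 * r) * (κ / 4) := by gcongr
      _ = r * κ / 2 := by ring
  refine le_of_sq_le_sq ?_ hr₀.le
  rw [norm_midpoint_add_smul_sq hs]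
  nlinarith

end RightAngleCollision

/-- The collisions of a particle of velocity `v` with a particle of velocity `v_*` near `v̄`,
`|v_* - v̄| ≤ η`, at nearly a right angle, `|cos θ| ≤ x`. -/
def collisionBand (v vbar : R3) (η x : ℝ) : Set (R3 × S2) :=
  {p | ‖p.1 - vbar‖ ≤ η ∧ |cosAngle v p.1 p.2| ≤ x}

section Band

variable {v vbar : R3} {η x : ℝ}

lemma measurableSet_collisionBand : MeasurableSet (collisionBand v vbar η x) := by
  have hcos : Measurable fun p : R3 × S2 => cosAngle v p.1 p.2 := by fun_prop
  exact (measurableSet_le (f := fun p : R3 × S2 => ‖p.1 - vbar‖) (by fun_prop)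
    measurable_const).inter
    (measurableSet_le hcos.norm measurable_const)

lemma sphMeasure_abs_cosAngle_le (hx : x < 1) {w : R3} (hvw : v ≠ w) :
    sphMeasure {σ | |cosAngle v w σ| ≤ x} = ENNReal.ofReal (4 * π * x) := by
  have hcos : Measurable fun σ : S2 => cosAngle v w σ := by fun_prop
  have hset : MeasurableSet {σ | |cosAngle v w σ| ≤ x} :=
    measurableSet_le hcos.norm measurable_const
  have h := lintegral_sphMeasure_inner (norm_smul_inv_norm (𝕜 := ℝ) (sub_ne_zero.2 hvw))
    (measurable_one.indicator (measurableSet_Icc (a := -x) (b := x)) (β := ENNReal))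
  rw [setLIntegral_indicator measurableSet_Icc,
    inter_eq_left.2 (Icc_subset_Ioo (neg_lt_neg hx) hx)] at h
  simp only [Pi.one_apply, setLIntegral_one, Real.volume_Icc] at h
  rw [← ENNReal.ofReal_mul (by positivity)] at h
  rw [← lintegral_indicator_one hset, show 4 * π * x = 2 * π * (x - -x) by ring, ← h]
  simp only [indicator, mem_ofPred_eq, abs_le, mem_Icc, cosAngle]
  rfl

lemma collisionMeasure_collisionBand (hx : x < 1) (hv : η < ‖v - vbar‖) :
    collisionMeasure (collisionBand v vbar η x)
      = ENNReal.ofReal (4 * π * x) * volume (Metric.closedBall vbar η) := by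
  rw [collisionMeasure, Measure.prod_apply measurableSet_collisionBand, ← setLIntegral_const,
    ← lintegral_indicator measurableSet_closedBall]
  refine lintegral_congr fun w => ?_
  by_cases hw : ‖w - vbar‖ ≤ η
  · have hvw : v ≠ w := by
      rintro rfl
      exact hw.not_gt hv
    rw [indicator_of_mem (mem_closedBall_iff_norm.2 hw), ← sphMeasure_abs_cosAngle_le hx hvw]
    congr 1 with σ
    exact and_iff_right hw
  · rw [indicator_of_notMem (by rwa [mem_closedBall_iff_norm])]
    exact measure_mono_null (fun σ hσ => hw hσ.1) measure_empty

lemma vOut_sub (v w c : R3) (σ : S2) :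
    vOut v w σ - c
      = (2⁻¹ : ℝ) • ((v - c) + (w - c)) + (‖(v - c) - (w - c)‖ / 2) • (σ : R3) := by
  rw [sub_sub_sub_cancel_right]
  unfold vOut
  module

lemma norm_mul_cosAngle (v w : R3) (σ : S2) : ‖v - w‖ * cosAngle v w σ = ⟪v - w, (σ : R3)⟫ := by
  rcases eq_or_ne v w with rfl | hvw
  · simp
  · rw [cosAngle, real_inner_smul_left,
      mul_inv_cancel_left₀ (norm_ne_zero_iff.2 (sub_ne_zero.2 hvw))]

lemma norm_vOut_sub_le_of_mem_collisionBand {r κ : ℝ} (hκ : 0 < κ) (hr : 10 * κ ≤ r)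
    (hv : ‖v - vbar‖ ≤ √2 * (r - κ)) {p : R3 × S2}
    (hp : p ∈ collisionBand v vbar (κ / 4) (κ / (8 * r))) : ‖vOut v p.1 p.2 - vbar‖ ≤ r := by
  rw [vOut_sub]
  refine norm_midpoint_add_smul_le (norm_eq_of_mem_sphere _) hκ hr hv hp.1 ?_
  rw [sub_sub_sub_cancel_right, ← norm_mul_cosAngle, abs_mul, abs_norm]
  exact mul_le_mul_of_nonneg_left hp.2 (norm_nonneg _)

lemma norm_vOutStar_sub_le_of_mem_collisionBand {r κ : ℝ} (hκ : 0 < κ) (hr : 10 * κ ≤ r)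
    (hv : ‖v - vbar‖ ≤ √2 * (r - κ)) {p : R3 × S2}
    (hp : p ∈ collisionBand v vbar (κ / 4) (κ / (8 * r))) :
    ‖vOutStar v p.1 p.2 - vbar‖ ≤ r := by
  rw [vOutStar_eq_vOut_neg]
  refine norm_vOut_sub_le_of_mem_collisionBand (p := (p.1, -p.2)) hκ hr hv ⟨hp.1, ?_⟩
  simpa only [cosAngle, coe_neg_sphere, inner_neg_right, abs_neg] using hp.2

end Band

lemma le_of_abs_le_sqrt_two_div_two {b : ℝ → ℝ} {c x : ℝ}
    (hb : ∀ θ ∈ Icc (π / 4) (3 * π / 4), c ≤ b (cos θ)) (hx : |x| ≤ √2 / 2) : c ≤ b x := by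
  have hsqrt : √2 ≤ 2 := Real.sqrt_le_iff.2 (by norm_num)
  have hx' := abs_le.1 hx
  have hquarter : arccos (√2 / 2) = π / 4 := by
    rw [← cos_pi_div_four, arccos_cos (by positivity) (by linarith [pi_pos])]
  have h := hb (arccos x) ⟨?_, ?_⟩
  · rwa [cos_arccos (by linarith) (by linarith)] at h
  · exact hquarter ▸ antitone_arccos hx'.2
  · have := antitone_arccos hx'.1
    rw [arccos_neg, hquarter] at this
    linarith

/-- The constant in the lower bound `κ a² a' / r` for the gain rate at `v`, where `f ≥ a` on the
ball of radius `r` around `v̄`, `1 - f ≥ a'` on the one of radius `δ`, `|v - v̄| ≤ √2 (r - δ/10)`,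
and `b(cos θ) ≥ c` for `θ` near `π/2`. -/
def gainConst (γ c δ : ℝ) (vbar : R3) : ℝ :=
  c * (δ / 2) ^ γ * (4 * π * (δ / 80) * volume.real (Metric.closedBall vbar (δ / 40)))

lemma gainConst_pos (γ : ℝ) {c δ : ℝ} (hc : 0 < c) (hδ : 0 < δ) (vbar : R3) :
    0 < gainConst γ c δ vbar := by
  have : 0 < volume.real (Metric.closedBall vbar (δ / 40)) :=
    ENNReal.toReal_pos (Metric.measure_closedBall_pos _ _ (by positivity)).ne'
      measure_closedBall_lt_top.ne
  unfold gainConst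
  positivity

section GainLowerBound

variable {γ : ℝ} {b : ℝ → ℝ} {c δ r a a' : ℝ} {f : R3 → ℝ} {v vbar : R3}

lemma le_gainIntegrand_of_mem_collisionBand (hγ : 0 ≤ γ) (hc : 0 ≤ c)
    (hb : ∀ θ ∈ Icc (π / 4) (3 * π / 4), c ≤ b (cos θ)) (hδ : 0 < δ) (hr : δ ≤ r) (ha : 0 ≤ a)
    (ha' : 0 ≤ a') (hv₁ : δ ≤ ‖v - vbar‖) (hv₂ : ‖v - vbar‖ ≤ √2 * (r - δ / 10)) {p : R3 × S2}
    (hp : p ∈ collisionBand v vbar (δ / 40) (δ / (80 * r)))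
    (hout : ‖vOut v p.1 p.2 - vbar‖ ≤ r → a ≤ f (vOut v p.1 p.2))
    (hstar : ‖vOutStar v p.1 p.2 - vbar‖ ≤ r → a ≤ f (vOutStar v p.1 p.2))
    (hhole : ‖p.1 - vbar‖ ≤ δ → a' ≤ 1 - f p.1) :
    c * (δ / 2) ^ γ * (a * a * a') ≤ gainIntegrand γ b f v p := by
  have hp' : p ∈ collisionBand v vbar (δ / 10 / 4) (δ / 10 / (8 * r)) := by
    convert hp using 2 <;> ring
  have hr₀ := hδ.trans_le hr
  have hvout := hout (norm_vOut_sub_le_of_mem_collisionBand (by positivity) (by linarith) hv₂ hp')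
  have hvstar := hstar
    (norm_vOutStar_sub_le_of_mem_collisionBand (by positivity) (by linarith) hv₂ hp')
  have hvhole := hhole (hp.1.trans (by linarith))
  have hrel : δ / 2 ≤ ‖v - p.1‖ := by
    have := norm_sub_le_norm_sub_add_norm_sub v p.1 vbar
    linarith [hp.1]
  have hbc : c ≤ b (cosAngle v p.1 p.2) := by
    refine le_of_abs_le_sqrt_two_div_two hb (hp.2.trans ?_)
    have : 1 ≤ √2 := Real.one_le_sqrt.2 one_le_two
    rw [div_le_iff₀ (by positivity)]
    nlinarith
  have := hc.trans hbc
  have := ha.trans hvout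
  have := ha.trans hvstar
  unfold gainIntegrand Bker
  rw [mul_comm c]
  gcongr

lemma gainConst_mul_div_le_gainRate (hγ : 0 ≤ γ) (hc : 0 ≤ c) (hb : GradCutoff b)
    (hbc : ∀ θ ∈ Icc (π / 4) (3 * π / 4), c ≤ b (cos θ)) (hδ : 0 < δ) (hr : δ ≤ r) (ha : 0 ≤ a)
    (ha' : 0 ≤ a') (hf : ∀ u, f u ∈ Icc 0 1)
    (hint : Integrable (gainIntegrand γ b f v) collisionMeasure)
    (hv₁ : δ ≤ ‖v - vbar‖) (hv₂ : ‖v - vbar‖ ≤ √2 * (r - δ / 10))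
    (hle : ∀ᵐ p ∂collisionMeasure, (‖vOut v p.1 p.2 - vbar‖ ≤ r → a ≤ f (vOut v p.1 p.2)) ∧
      (‖vOutStar v p.1 p.2 - vbar‖ ≤ r → a ≤ f (vOutStar v p.1 p.2)) ∧
      (‖p.1 - vbar‖ ≤ δ → a' ≤ 1 - f p.1)) :
    gainConst γ c δ vbar * (a * a * a') / r ≤ gainRate γ b f v := by
  have hr₀ : 0 < r := hδ.trans_le hr
  have hx₁ : δ / (80 * r) < 1 := by
    rw [div_lt_one (by positivity)]
    linarith
  have hmeasure := collisionMeasure_collisionBand (v := v) (vbar := vbar) (η := δ / 40)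
    hx₁ (by linarith)
  have hfin : collisionMeasure (collisionBand v vbar (δ / 40) (δ / (80 * r))) ≠ ⊤ :=
    hmeasure ▸ ENNReal.mul_ne_top ENNReal.ofReal_ne_top measure_closedBall_lt_top.ne
  calc gainConst γ c δ vbar * (a * a * a') / r
      = ∫ _ in collisionBand v vbar (δ / 40) (δ / (80 * r)),
          c * (δ / 2) ^ γ * (a * a * a') ∂collisionMeasure := by
        rw [setIntegral_const, Measure.real, hmeasure, ENNReal.toReal_mul,
          ENNReal.toReal_ofReal (by positivity), smul_eq_mul, gainConst, Measure.real]
        field_simp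
    _ ≤ ∫ p in collisionBand v vbar (δ / 40) (δ / (80 * r)),
          gainIntegrand γ b f v p ∂collisionMeasure := by
        refine setIntegral_mono_on_ae (integrableOn_const hfin) hint.integrableOn
          measurableSet_collisionBand ?_
        filter_upwards [hle] with p ⟨hout, hstar, hhole⟩ hp
        exact le_gainIntegrand_of_mem_collisionBand hγ hc hbc hδ hr ha ha' hv₁ hv₂ hp hout hstar
          hhole
    _ ≤ gainRate γ b f v := setIntegral_le_integral hint (ae_of_all _ (gainIntegrand_nonneg hb hf))

end GainLowerBound

/-! ### Spreading of lower bounds -/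

/-- The radii `r_n = δ (1 + √2ⁿ) / 2` of the balls to which the lower bound spreads, chosen so that
`r_{n+1} ≤ √2 (r_n - δ/10)`. -/
def spreadRadius (δ : ℝ) (n : ℕ) : ℝ := δ / 2 * (1 + √2 ^ n)

section SpreadRadius

variable {δ : ℝ}

lemma one_le_sqrt_two_pow (n : ℕ) : 1 ≤ √2 ^ n := one_le_pow₀ (Real.one_le_sqrt.2 one_le_two)

lemma spreadRadius_zero (δ : ℝ) : spreadRadius δ 0 = δ := by
  rw [spreadRadius, pow_zero]
  ring

lemma le_spreadRadius (hδ : 0 ≤ δ) (n : ℕ) : δ ≤ spreadRadius δ n := by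
  have := mul_le_mul_of_nonneg_left (one_le_sqrt_two_pow n) hδ
  unfold spreadRadius
  linarith

lemma spreadRadius_succ_le (hδ : 0 ≤ δ) (n : ℕ) :
    spreadRadius δ (n + 1) ≤ √2 * (spreadRadius δ n - δ / 10) := by
  have h : 5 / 4 ≤ √2 := Real.le_sqrt_of_sq_le (by norm_num)
  have := mul_le_mul_of_nonneg_left h hδ
  unfold spreadRadius
  rw [pow_succ]
  linarith

lemma spreadRadius_sq_le (hδ : 0 ≤ δ) (n : ℕ) : spreadRadius δ n ^ 2 ≤ δ ^ 2 * 2 ^ n := by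
  have h : spreadRadius δ n ≤ δ * √2 ^ n := by
    have := mul_le_mul_of_nonneg_left (one_le_sqrt_two_pow n) hδ
    unfold spreadRadius
    linarith
  calc spreadRadius δ n ^ 2 ≤ (δ * √2 ^ n) ^ 2 :=
        pow_le_pow_left₀ (hδ.trans (le_spreadRadius hδ n)) h 2
    _ = δ ^ 2 * 2 ^ n := by
        rw [mul_pow, ← pow_mul, mul_comm n, pow_mul, Real.sq_sqrt zero_le_two]

lemma spreadRadius_le (hδ : 0 ≤ δ) (n : ℕ) : spreadRadius δ n ≤ δ * 2 ^ n := by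
  refine le_of_sq_le_sq ((spreadRadius_sq_le hδ n).trans ?_) (by positivity)
  rw [mul_pow]
  gcongr
  exact le_self_pow₀ (one_le_pow₀ one_le_two) two_ne_zero

lemma exists_le_spreadRadius (hδ : 0 < δ) (x : ℝ) :
    ∃ n, x ≤ spreadRadius δ n ∧ 2 ^ n ≤ 2 + 8 * x ^ 2 / δ ^ 2 := by
  have hone : 1 ≤ 1 + 4 * x ^ 2 / δ ^ 2 := le_add_of_nonneg_right (by positivity)
  obtain ⟨n, hle, hlt⟩ := exists_nat_pow_near hone one_lt_two
  refine ⟨n + 1, ?_, ?_⟩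
  · have hsq : x ^ 2 ≤ (δ / 2 * √2 ^ (n + 1)) ^ 2 := by
      rw [mul_pow, ← pow_mul, mul_comm (n + 1), pow_mul, Real.sq_sqrt zero_le_two]
      have : 4 * x ^ 2 / δ ^ 2 ≤ 2 ^ (n + 1) := by linarith
      rw [div_le_iff₀ (by positivity)] at this
      linarith
    have := le_of_sq_le_sq hsq (by positivity)
    unfold spreadRadius
    linarith
  · rw [pow_succ]
    calc (2 : ℝ) ^ n * 2 ≤ (1 + 4 * x ^ 2 / δ ^ 2) * 2 := by gcongr
      _ = 2 + 8 * x ^ 2 / δ ^ 2 := by ring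

end SpreadRadius

/-- The lower bounds `a_n` on the balls of radius `r_n`: the solution of the recursion `a_0 = ε`,
`a_{n+1} = c 8⁻ⁿ a_n²`. -/
def spreadBound (c ε : ℝ) (n : ℕ) : ℝ := 8 ^ (n + 1) / c * (c * ε / 8) ^ 2 ^ n

section SpreadBound

variable {c ε : ℝ}

lemma spreadBound_zero (hc : c ≠ 0) (ε : ℝ) : spreadBound c ε 0 = ε := by
  rw [spreadBound, zero_add, pow_one, pow_zero, pow_one]
  field_simp

lemma spreadBound_succ (hc : c ≠ 0) (ε : ℝ) (n : ℕ) :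
    spreadBound c ε (n + 1) = c / 8 ^ n * (spreadBound c ε n * spreadBound c ε n) := by
  unfold spreadBound
  rw [pow_succ 2 n, pow_mul]
  field_simp
  ring

lemma spreadBound_nonneg (hc : 0 ≤ c) (hε : 0 ≤ ε) (n : ℕ) : 0 ≤ spreadBound c ε n := by
  unfold spreadBound
  positivity

lemma spreadBound_le (hc : 0 < c) (hc₁ : c ≤ 1) (hε : 0 ≤ ε) (hε₁ : ε ≤ 1) (n : ℕ) :
    spreadBound c ε n ≤ ε := by
  induction n with
  | zero => rw [spreadBound_zero hc.ne']
  | succ n ih =>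
    have h8 : c / 8 ^ n ≤ 1 :=
      div_le_one_of_le₀ (hc₁.trans (one_le_pow₀ (by norm_num))) (by positivity)
    have := spreadBound_nonneg hc.le hε n
    calc spreadBound c ε (n + 1) = c / 8 ^ n * (spreadBound c ε n * spreadBound c ε n) :=
          spreadBound_succ hc.ne' ε n
      _ ≤ 1 * (ε * 1) := by
          gcongr
          exact ih.trans hε₁
      _ = ε := by ring

lemma pow_two_pow_le_spreadBound (hc : 0 < c) (hc₁ : c ≤ 1) (hε : 0 ≤ ε) (n : ℕ) :
    (c * ε / 8) ^ 2 ^ n ≤ spreadBound c ε n := by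
  refine le_mul_of_one_le_left (by positivity) ((one_le_div hc).2 (hc₁.trans ?_))
  exact one_le_pow₀ (by norm_num)

end SpreadBound

lemma one_add_norm_sq_le {E : Type*} [NormedAddCommGroup E] {v c : E} {δ : ℝ} (hδ : 0 ≤ δ) {n : ℕ}
    (hv : ‖v - c‖ ≤ spreadRadius δ (n + 1)) :
    1 + ‖v‖ ^ 2 ≤ (1 + 2 * ‖c‖ ^ 2 + 4 * δ ^ 2) * 2 ^ n := by
  have hradius := spreadRadius_sq_le hδ (n + 1)
  have hpow : (1 : ℝ) ≤ 2 ^ n := one_le_pow₀ one_le_two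
  calc 1 + ‖v‖ ^ 2 ≤ 1 + (‖c‖ + ‖v - c‖) ^ 2 := by
        gcongr
        exact norm_le_norm_add_norm_sub' v c
    _ ≤ 1 + (‖c‖ + spreadRadius δ (n + 1)) ^ 2 := by gcongr
    _ ≤ 1 + (2 * ‖c‖ ^ 2 + 2 * spreadRadius δ (n + 1) ^ 2) := by
        linarith [sq_nonneg (‖c‖ - spreadRadius δ (n + 1))]
    _ ≤ (1 + 2 * ‖c‖ ^ 2) * 1 + 2 * (δ ^ 2 * 2 ^ (n + 1)) := by linarith
    _ ≤ (1 + 2 * ‖c‖ ^ 2) * 2 ^ n + 2 * (δ ^ 2 * 2 ^ (n + 1)) := by gcongr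
    _ = (1 + 2 * ‖c‖ ^ 2 + 4 * δ ^ 2) * 2 ^ n := by ring

section Spreading

variable {γ : ℝ} {b : ℝ → ℝ} {K c ε δ T : ℝ} {f : ℝ → R3 → ℝ} {vbar : R3}

lemma IsFDFlow.nonneg (hb : GradCutoff b) (hf : IsFDFlow γ b K f) : 0 ≤ K := by
  have h := (gainRate_nonneg hb (hf.mem_Icc 0 le_rfl) 0).trans (hf.gainRate_le 0 le_rfl 0)
  simpa using h

lemma IsFDFlow.ae_mul_exp_le_of_initial (hb : GradCutoff b) (hf : IsFDFlow γ b K f) (hε : 0 ≤ ε)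
    (hinit : ∀ᵐ v, ‖v - vbar‖ ≤ δ → ε ≤ f 0 v) :
    ∀ᵐ v, ∀ t ∈ Icc 0 T, ‖v - vbar‖ ≤ δ →
      ε * exp (-(K * (1 + (‖vbar‖ + δ) ^ 2) * T)) ≤ f t v := by
  filter_upwards [hinit, hf.ae_mul_exp_le hb] with v hv hdecay t ht hvδ
  refine le_trans ?_ (hdecay 0 t le_rfl ht.1)
  have hK := hf.nonneg hb
  have hnorm : ‖v‖ ≤ ‖vbar‖ + δ := (norm_le_norm_add_norm_sub' v vbar).trans (by gcongr)
  rw [sub_zero]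
  gcongr
  · exact hε.trans (hv hvδ)
  · exact hv hvδ
  · exact ht.1
  · exact ht.2

lemma IsFDFlow.ae_le_of_ae_le_ball (hγ : 0 ≤ γ) (hb : GradCutoff b) (hc : 0 ≤ c)
    (hbc : ∀ θ ∈ Icc (π / 4) (3 * π / 4), c ≤ b (cos θ)) (hf : IsFDFlow γ b K f) (hδ : 0 < δ)
    {a r t₀ s : ℝ} (hr : δ ≤ r) (ha : 0 ≤ a) (hε : 0 ≤ ε) (ht₀ : 0 ≤ t₀) (hs : 0 ≤ s) (hs₁ : s ≤ 1)
    (hball : ∀ᵐ v, ∀ t ∈ Icc t₀ T, ‖v - vbar‖ ≤ r → a ≤ f t v)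
    (hhole : ∀ᵐ v, ∀ t ∈ Icc t₀ T, ‖v - vbar‖ ≤ δ → ε ≤ 1 - f t v) :
    ∀ᵐ v, ∀ t ∈ Icc (t₀ + s) T, δ ≤ ‖v - vbar‖ → ‖v - vbar‖ ≤ √2 * (r - δ / 10) →
      gainConst γ c δ vbar * (a * a * ε) / r * s / (1 + 2 * (K * (1 + ‖v‖ ^ 2))) ≤ f t v := by
  filter_upwards [ae_ae_collision (hball.and hhole), hf.ae_div_le_of_le_gainRate]
    with v hcoll hcreate t ht hv₁ hv₂
  have hrate : ∀ τ ∈ Icc (t - s) t,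
      gainConst γ c δ vbar * (a * a * ε) / r ≤ gainRate γ b (f τ) v := by
    intro τ hτ
    have hτ' : τ ∈ Icc t₀ T := ⟨by linarith [ht.1, hτ.1], hτ.2.trans ht.2⟩
    refine gainConst_mul_div_le_gainRate hγ hc hb hbc hδ hr ha hε
      (hf.mem_Icc τ (ht₀.trans hτ'.1)) (hf.integrable_gain τ (ht₀.trans hτ'.1) v) hv₁ hv₂ ?_
    filter_upwards [hcoll] with p ⟨hout, hstar, hpartner⟩
    exact ⟨hout.1 τ hτ', hstar.1 τ hτ', hpartner.2 τ hτ'⟩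
  have hgain : 0 ≤ gainConst γ c δ vbar := by
    unfold gainConst
    positivity
  have hr₀ := hδ.le.trans hr
  have h := hcreate _ (t - s) t (by positivity) (by linarith [ht.1]) (by linarith) (by linarith)
    hrate
  rwa [sub_sub_cancel] at h

/-- The constant `c` of the recursion `a_{n+1} = c 8⁻ⁿ a_n²` for the lower bounds created within the
time interval `[0, s]`; of the factor `8ⁿ`, one `2ⁿ` is due to the radius `r_n` in the gain rate,
one to the length `2⁻ⁿ⁻¹ s` of the `n`-th time step and one to the size of the rates on the ball of
radius `r_{n+1}`. -/
def spreadConst (γ K c ε δ s : ℝ) (vbar : R3) : ℝ :=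
  min 1 (gainConst γ c δ vbar * ε * s /
    (2 * δ * (1 + 2 * (K * (1 + 2 * ‖vbar‖ ^ 2 + 4 * δ ^ 2)))))

lemma spreadConst_pos {s : ℝ} (hc : 0 < c) (hK : 0 ≤ K) (hε : 0 < ε) (hδ : 0 < δ) (hs : 0 < s) :
    0 < spreadConst γ K c ε δ s vbar := by
  have := gainConst_pos γ hc hδ vbar
  exact lt_min one_pos (by positivity)

lemma spreadBound_succ_le {s : ℝ} (hc : 0 < c) (hK : 0 ≤ K) (hε : 0 < ε) (hδ : 0 < δ) (hs : 0 < s)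
    {n : ℕ} {v : R3} (hv : ‖v - vbar‖ ≤ spreadRadius δ (n + 1)) :
    spreadBound (spreadConst γ K c ε δ s vbar) ε (n + 1)
      ≤ gainConst γ c δ vbar * (spreadBound (spreadConst γ K c ε δ s vbar) ε n
          * spreadBound (spreadConst γ K c ε δ s vbar) ε n * ε) / spreadRadius δ n
        * (s * (1 / 2) ^ (n + 1)) / (1 + 2 * (K * (1 + ‖v‖ ^ 2))) := by
  have hconst := spreadConst_pos (γ := γ) (vbar := vbar) hc hK hε hδ hs
  have hG := gainConst_pos γ hc hδ vbar
  have hr : 0 < spreadRadius δ n := hδ.trans_le (le_spreadRadius hδ.le n)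
  have hden : 1 + 2 * (K * (1 + ‖v‖ ^ 2))
      ≤ (1 + 2 * (K * (1 + 2 * ‖vbar‖ ^ 2 + 4 * δ ^ 2))) * 2 ^ n := by
    have hpow : (1 : ℝ) ≤ 2 ^ n := one_le_pow₀ one_le_two
    linarith [mul_le_mul_of_nonneg_left (one_add_norm_sq_le hδ.le hv) hK]
  have ha := spreadBound_nonneg hconst.le hε.le n
  rw [spreadBound_succ hconst.ne']
  set a := spreadBound (spreadConst γ K c ε δ s vbar) ε n
  calc spreadConst γ K c ε δ s vbar / 8 ^ n * (a * a)
      ≤ gainConst γ c δ vbar * ε * s /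
          (2 * δ * (1 + 2 * (K * (1 + 2 * ‖vbar‖ ^ 2 + 4 * δ ^ 2)))) / 8 ^ n * (a * a) := by
        gcongr
        exact min_le_right _ _
    _ = gainConst γ c δ vbar * (a * a * ε) / (δ * 2 ^ n) * (s * (1 / 2) ^ (n + 1)) /
          ((1 + 2 * (K * (1 + 2 * ‖vbar‖ ^ 2 + 4 * δ ^ 2))) * 2 ^ n) := by
        rw [show (8 : ℝ) = 2 * 2 * 2 by norm_num, mul_pow, mul_pow, one_div, inv_pow, pow_succ]
        field_simp
        ring
    _ ≤ gainConst γ c δ vbar * (a * a * ε) / spreadRadius δ n * (s * (1 / 2) ^ (n + 1)) /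
          (1 + 2 * (K * (1 + ‖v‖ ^ 2))) := by
        gcongr
        exact spreadRadius_le hδ.le n

lemma IsFDFlow.ae_spreadBound_le (hγ : 0 ≤ γ) (hb : GradCutoff b) (hc : 0 < c)
    (hbc : ∀ θ ∈ Icc (π / 4) (3 * π / 4), c ≤ b (cos θ)) (hf : IsFDFlow γ b K f) (hδ : 0 < δ)
    {s : ℝ} (hε : 0 < ε) (hε₁ : ε ≤ 1) (hs : 0 < s) (hs₁ : s ≤ 1)
    (hball : ∀ᵐ v, ∀ t ∈ Icc 0 T, ‖v - vbar‖ ≤ δ → ε ≤ f t v)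
    (hhole : ∀ᵐ v, ∀ t ∈ Icc 0 T, ‖v - vbar‖ ≤ δ → ε ≤ 1 - f t v) (n : ℕ) :
    ∀ᵐ v, ∀ t ∈ Icc (s * (1 - (1 / 2) ^ n)) T, ‖v - vbar‖ ≤ spreadRadius δ n →
      spreadBound (spreadConst γ K c ε δ s vbar) ε n ≤ f t v := by
  have hK := hf.nonneg hb
  have hconst := spreadConst_pos (γ := γ) (vbar := vbar) hc hK hε hδ hs
  have htime (n : ℕ) : 0 ≤ s * (1 - (1 / 2) ^ n) :=
    mul_nonneg hs.le (sub_nonneg.2 (pow_le_one₀ (by norm_num) (by norm_num)))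
  induction n with
  | zero => simpa only [pow_zero, sub_self, mul_zero, spreadRadius_zero,
      spreadBound_zero hconst.ne'] using hball
  | succ n ih =>
    have hstep := hf.ae_le_of_ae_le_ball hγ hb hc.le hbc hδ (le_spreadRadius hδ.le n)
      (spreadBound_nonneg hconst.le hε.le n) hε.le (htime n)
      (s := s * (1 / 2) ^ (n + 1)) (by positivity)
      (mul_le_one₀ hs₁ (by positivity) (pow_le_one₀ (by norm_num) (by norm_num))) ih
      (hhole.mono fun v hv t ht => hv t ⟨(htime n).trans ht.1, ht.2⟩)
    filter_upwards [hball, hstep] with v hv hvstep t ht hvr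
    rcases le_total ‖v - vbar‖ δ with hvδ | hvδ
    · exact (spreadBound_le hconst (min_le_left _ _) hε.le hε₁ _).trans
        (hv t ⟨(htime _).trans ht.1, ht.2⟩ hvδ)
    · refine (spreadBound_succ_le hc hK hε hδ hs hvr).trans
        (hvstep t ⟨le_trans (le_of_eq ?_) ht.1, ht.2⟩ hvδ
          (hvr.trans (spreadRadius_succ_le hδ.le n)))
      ring

end Spreading

/-! ### Gaussian bounds -/

section GaussianBounds

variable {γ : ℝ} {b : ℝ → ℝ} {K c ε δ s T p : ℝ} {f : ℝ → R3 → ℝ} {vbar : R3}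

lemma exists_norm_sub_le_spreadRadius {E : Type*} [NormedAddCommGroup E] (hδ : 0 < δ) (v w : E) :
    ∃ n, ‖v - w‖ ≤ spreadRadius δ n ∧
      2 ^ n ≤ 2 + 16 * ‖w‖ ^ 2 / δ ^ 2 + 16 / δ ^ 2 * ‖v‖ ^ 2 := by
  obtain ⟨n, hradius, hpow⟩ := exists_le_spreadRadius hδ ‖v - w‖
  refine ⟨n, hradius, hpow.trans ?_⟩
  have hsq : ‖v - w‖ ^ 2 ≤ 2 * ‖v‖ ^ 2 + 2 * ‖w‖ ^ 2 :=
    calc ‖v - w‖ ^ 2 ≤ (‖v‖ + ‖w‖) ^ 2 := by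
          gcongr
          exact norm_sub_le v w
      _ ≤ 2 * ‖v‖ ^ 2 + 2 * ‖w‖ ^ 2 := by linarith [sq_nonneg (‖v‖ - ‖w‖)]
  calc 2 + 8 * ‖v - w‖ ^ 2 / δ ^ 2 ≤ 2 + 8 * (2 * ‖v‖ ^ 2 + 2 * ‖w‖ ^ 2) / δ ^ 2 := by gcongr
    _ = 2 + 16 * ‖w‖ ^ 2 / δ ^ 2 + 16 / δ ^ 2 * ‖v‖ ^ 2 := by ring

lemma rpow_mul_exp_le_pow_two_pow {q A B x : ℝ} (hq : 0 < q) (hq₁ : q ≤ 1) {n : ℕ}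
    (hn : 2 ^ n ≤ A + B * x) : q ^ A * exp (-(-log q * B) * x) ≤ q ^ 2 ^ n :=
  calc q ^ A * exp (-(-log q * B) * x) = q ^ (A + B * x) := by
        rw [rpow_add hq, rpow_def_of_pos hq (B * x)]
        ring_nf
    _ ≤ q ^ (2 ^ n : ℝ) := rpow_le_rpow_of_exponent_ge hq hq₁ hn
    _ = q ^ 2 ^ n := by exact_mod_cast rpow_natCast q (2 ^ n)

lemma IsFDFlow.exists_gaussian_le_of_ball (hγ : 0 ≤ γ) (hb : GradCutoff b) (hc : 0 < c)
    (hbc : ∀ θ ∈ Icc (π / 4) (3 * π / 4), c ≤ b (cos θ)) (hf : IsFDFlow γ b K f) (hδ : 0 < δ)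
    (hε : 0 < ε) (hε₁ : ε ≤ 1) (hs : 0 < s) (hs₁ : s ≤ 1)
    (hball : ∀ᵐ v, ∀ t ∈ Icc 0 T, ‖v - vbar‖ ≤ δ → ε ≤ f t v)
    (hhole : ∀ᵐ v, ∀ t ∈ Icc 0 T, ‖v - vbar‖ ≤ δ → ε ≤ 1 - f t v) :
    ∃ C₁ > 0, ∃ C₂ > 0, ∀ᵐ v, ∀ t ∈ Icc s T, C₁ * exp (-C₂ * ‖v‖ ^ 2) ≤ f t v := by
  have hconst := spreadConst_pos (γ := γ) (vbar := vbar) hc (hf.nonneg hb) hε hδ hs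
  have hconst₁ : spreadConst γ K c ε δ s vbar ≤ 1 := min_le_left _ _
  have hspread := hf.ae_spreadBound_le hγ hb hc hbc hδ hε hε₁ hs hs₁ hball hhole
  set κ := spreadConst γ K c ε δ s vbar
  have hq : 0 < κ * ε / 8 := by positivity
  have hq₁ : κ * ε / 8 < 1 := by linarith [mul_le_one₀ hconst₁ hε.le hε₁]
  have hlog : 0 < -log (κ * ε / 8) := neg_pos.2 (log_neg hq hq₁)
  refine ⟨(κ * ε / 8) ^ (2 + 16 * ‖vbar‖ ^ 2 / δ ^ 2), rpow_pos_of_pos hq _,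
    -log (κ * ε / 8) * (16 / δ ^ 2), by positivity, ?_⟩
  filter_upwards [ae_all_iff.2 hspread] with v hv t ht
  obtain ⟨n, hradius, hpow⟩ := exists_norm_sub_le_spreadRadius hδ v vbar
  have htime : s * (1 - (1 / 2) ^ n) ≤ s :=
    mul_le_of_le_one_right hs.le (sub_le_self 1 (by positivity))
  calc (κ * ε / 8) ^ (2 + 16 * ‖vbar‖ ^ 2 / δ ^ 2)
        * exp (-(-log (κ * ε / 8) * (16 / δ ^ 2)) * ‖v‖ ^ 2)
      ≤ (κ * ε / 8) ^ 2 ^ n := rpow_mul_exp_le_pow_two_pow hq hq₁.le hpow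
    _ ≤ spreadBound κ ε n := pow_two_pow_le_spreadBound hconst hconst₁ hε.le n
    _ ≤ f t v := hv n t ⟨htime.trans ht.1, ht.2⟩ hradius

lemma IsFDFlow.exists_gaussian_le (hγ : 0 ≤ γ) (hb : GradCutoff b) (hc : 0 < c)
    (hbc : ∀ θ ∈ Icc (π / 4) (3 * π / 4), c ≤ b (cos θ)) (hf : IsFDFlow γ b K f) (hδ : 0 < δ)
    (hε : 0 < ε) (hs : 0 < s) (hs₁ : s ≤ 1)
    (hball : ∀ᵐ v, ‖v - vbar‖ ≤ δ → ε ≤ f 0 v)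
    (hhole : ∀ᵐ v, ‖v - vbar‖ ≤ δ → ε ≤ (1 - f) 0 v) :
    ∃ C₁ > 0, ∃ C₂ > 0, ∀ᵐ v, ∀ t ∈ Icc s T, C₁ * exp (-C₂ * ‖v‖ ^ 2) ≤ f t v := by
  set η := ε * exp (-(K * (1 + (‖vbar‖ + δ) ^ 2) * T))
  have hη : 0 < η := by positivity
  refine hf.exists_gaussian_le_of_ball (vbar := vbar) hγ hb hc hbc hδ (lt_min one_pos hη)
    (min_le_left 1 η) hs hs₁ ?_ ?_
  · filter_upwards [hf.ae_mul_exp_le_of_initial hb hε.le hball] with v hv t ht hvδ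
    exact (min_le_right 1 η).trans (hv t ht hvδ)
  · filter_upwards [hf.one_sub.ae_mul_exp_le_of_initial hb hε.le hhole] with v hv t ht hvδ
    exact (min_le_right 1 η).trans (hv t ht hvδ)

lemma sq_le_one_add_rpow {x : ℝ} (hx : 0 ≤ x) (hp : 2 ≤ p) : x ^ 2 ≤ 1 + x ^ p := by
  rcases le_total x 1 with hx₁ | hx₁
  · linarith [pow_le_one₀ hx hx₁ (n := 2), rpow_nonneg hx p]
  · have := rpow_le_rpow_of_exponent_le hx₁ hp
    rw [rpow_two] at this
    linarith

lemma exp_neg_mul_exp_neg_mul_rpow_le {B x : ℝ} (hB : 0 ≤ B) (hx : 0 ≤ x) (hp : 2 ≤ p) :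
    exp (-B) * exp (-B * x ^ p) ≤ exp (-B * x ^ 2) := by
  rw [← exp_add, exp_le_exp]
  linarith [mul_le_mul_of_nonneg_left (sq_le_one_add_rpow hx hp) hB]

lemma IsFDFlow.exists_gaussian_bounds (hγ : 0 ≤ γ) (hb : GradCutoff b) (hc : 0 < c)
    (hbc : ∀ θ ∈ Icc (π / 4) (3 * π / 4), c ≤ b (cos θ)) (hf : IsFDFlow γ b K f) (hp : 2 ≤ p)
    (hδ : 0 < δ) (hε : 0 < ε) (hs : 0 < s) (hs₁ : s ≤ 1)
    (hball : ∀ᵐ v, ‖v - vbar‖ ≤ δ → ε ≤ f 0 v)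
    (hhole : ∀ᵐ v, ‖v - vbar‖ ≤ δ → f 0 v ≤ 1 - ε) :
    ∃ m > 0, ∃ M > 0, ∀ᵐ v, ∀ t ∈ Icc s T,
      m * exp (-M * ‖v‖ ^ 2) ≤ f t v ∧ f t v ≤ 1 - m * exp (-M * ‖v‖ ^ p) := by
  have hhole' : ∀ᵐ v, ‖v - vbar‖ ≤ δ → ε ≤ (1 - f) 0 v :=
    hhole.mono fun v hv hvδ => le_sub_comm.1 (hv hvδ)
  obtain ⟨A₁, hA₁, A₂, hA₂, hlower⟩ :=
    hf.exists_gaussian_le hγ hb hc hbc hδ hε hs hs₁ hball hhole'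
  obtain ⟨B₁, hB₁, B₂, hB₂, hupper⟩ :=
    hf.one_sub.exists_gaussian_le hγ hb hc hbc hδ hε hs hs₁ hhole'
      (by simpa only [sub_sub_cancel] using hball)
  refine ⟨min A₁ (B₁ * exp (-B₂)), by positivity, max A₂ B₂, by positivity, ?_⟩
  filter_upwards [hlower, hupper] with v hlow hup t ht
  refine ⟨le_trans ?_ (hlow t ht), le_sub_comm.1 (le_trans ?_ (hup t ht))⟩
  · gcongr
    · exact min_le_left _ _
    · exact le_max_left _ _
  · calc min A₁ (B₁ * exp (-B₂)) * exp (-max A₂ B₂ * ‖v‖ ^ p)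
        ≤ B₁ * exp (-B₂) * exp (-B₂ * ‖v‖ ^ p) := by
          gcongr
          · exact min_le_right _ _
          · exact le_max_right _ _
      _ = B₁ * (exp (-B₂) * exp (-B₂ * ‖v‖ ^ p)) := mul_assoc _ _ _
      _ ≤ B₁ * exp (-B₂ * ‖v‖ ^ 2) := by
          gcongr
          exact exp_neg_mul_exp_neg_mul_rpow_le hB₂.le (norm_nonneg v) hp

end GaussianBounds

lemma exists_locally_bounded_constants {P : ℝ → ℝ → ℝ → Prop}
    (h : ∀ T, 1 ≤ T → ∃ m > 0, ∃ M > 0, ∀ t ∈ Icc T⁻¹ T, P t m M) :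
    ∃ C₁ C₂ : ℝ → ℝ, (∀ t, 0 < t → 0 < C₁ t ∧ 0 < C₂ t) ∧ (∀ t, 0 < t → P t (C₁ t) (C₂ t)) ∧
      (∀ T, 1 ≤ T → ∃ m > 0, ∀ t ∈ Icc T⁻¹ T, m ≤ C₁ t) ∧
      (∀ T, 1 ≤ T → ∃ M, ∀ t ∈ Icc T⁻¹ T, C₂ t ≤ M) := by
  choose m hm M hM hP using fun n : ℕ => h (n + 1) (le_add_of_nonneg_left n.cast_nonneg)
  have hceil : ∀ T : ℝ, 1 ≤ T → ∀ t ∈ Icc T⁻¹ T, ⌈max t t⁻¹⌉₊ ∈ Iic ⌈T⌉₊ := fun T hT t ht =>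
    Nat.ceil_le_ceil (max_le ht.2 (inv_le_of_inv_le₀ (by linarith) ht.1))
  refine ⟨fun t => m ⌈max t t⁻¹⌉₊, fun t => M ⌈max t t⁻¹⌉₊, fun t _ => ⟨hm _, hM _⟩,
    fun t ht => hP _ t ?_, fun T hT => ?_, fun T hT => ?_⟩
  · have hmax : max t t⁻¹ ≤ (⌈max t t⁻¹⌉₊ : ℝ) + 1 := (Nat.le_ceil _).trans (by linarith)
    exact ⟨inv_le_of_inv_le₀ ht ((le_max_right _ _).trans hmax), (le_max_left _ _).trans hmax⟩
  · obtain ⟨k, -, hk⟩ := exists_min_image _ m (finite_Iic ⌈T⌉₊) nonempty_Iic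
    exact ⟨m k, hm k, fun t ht => hk _ (hceil T hT t ht)⟩
  · obtain ⟨k, -, hk⟩ := exists_max_image _ M (finite_Iic ⌈T⌉₊) nonempty_Iic
    exact ⟨M k, fun t ht => hk _ (hceil T hT t ht)⟩

lemma IsFDSolution.ae_eq_initial {γ : ℝ} {b : ℝ → ℝ} {f₀ : R3 → ℝ} {f : ℝ → R3 → ℝ}
    (hf : IsFDSolution γ b f₀ f) : f 0 =ᵐ[volume] f₀ := by
  obtain ⟨Z, hZ, hmild⟩ := hf.mild
  filter_upwards [measure_eq_zero_iff_ae_notMem.1 hZ] with v hv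
  simpa using hmild 0 le_rfl v hv

lemma two_le_two_mul_log_three_div_log_two : 2 ≤ 2 * log 3 / log 2 := by
  rw [le_div_iff₀ (log_pos one_lt_two)]
  gcongr
  norm_num

theorem gaussian_lower_bound_creation_general {γ : ℝ} (hγ₀ : 0 ≤ γ) (hγ₂ : γ ≤ 2) {b : ℝ → ℝ}
    (hb : GradCutoff b) {c : ℝ} (hc : 0 < c)
    (hbc : ∀ θ ∈ Icc (π / 4) (3 * π / 4), c ≤ b (cos θ)) {f₀ : R3 → ℝ} {f : ℝ → R3 → ℝ}
    (hf : IsFDSolution γ b f₀ f) {ε : ℝ} (hε : 0 < ε) {vbar : R3} {δ : ℝ} (hδ : 0 < δ)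
    (hinit : ∀ᵐ v, ‖v - vbar‖ ≤ δ → ε ≤ f₀ v ∧ f₀ v ≤ 1 - ε) {p : ℝ} (hp : 2 ≤ p) :
    ∃ C₁ C₂ : ℝ → ℝ,
      (∀ t, 0 < t → 0 < C₁ t ∧ 0 < C₂ t) ∧
      (∀ t, 0 < t → ∀ᵐ v, C₁ t * exp (-(C₂ t) * ‖v‖ ^ 2) ≤ f t v ∧
        f t v ≤ 1 - C₁ t * exp (-(C₂ t) * ‖v‖ ^ p)) ∧
      (∀ T, 1 ≤ T → ∃ m > 0, ∀ t ∈ Icc T⁻¹ T, m ≤ C₁ t) ∧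
      (∀ T, 1 ≤ T → ∃ M, ∀ t ∈ Icc T⁻¹ T, C₂ t ≤ M) := by
  have hinit₀ : ∀ᵐ v, ‖v - vbar‖ ≤ δ → ε ≤ f 0 v ∧ f 0 v ≤ 1 - ε := by
    filter_upwards [hf.ae_eq_initial, hinit] with v hv hball
    rwa [hv]
  refine exists_locally_bounded_constants (P := fun t m M => ∀ᵐ v,
    m * exp (-M * ‖v‖ ^ 2) ≤ f t v ∧ f t v ≤ 1 - m * exp (-M * ‖v‖ ^ p)) fun T hT => ?_
  obtain ⟨m, hm, M, hM, hbounds⟩ := (hf.isFDFlow hγ₀ hγ₂ hb).exists_gaussian_bounds hγ₀ hb hc hbc hp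
    hδ hε (s := T⁻¹) (T := T) (by positivity) (inv_le_one_of_one_le₀ hT)
    (hinit₀.mono fun v hv hvδ => (hv hvδ).1) (hinit₀.mono fun v hv hvδ => (hv hvδ).2)
  exact ⟨m, hm, M, hM, fun t ht => hbounds.mono fun v hv => hv t ht⟩

/-- Creation of a Gaussian lower bound (and exponential upper bound)
assuming `ε ≤ f₀ ≤ 1 - ε` on a ball. -/
theorem gaussian_lower_bound_creation
    (γ : ℝ) (hγ₀ : 0 ≤ γ) (hγ₂ : γ ≤ 2) (b : ℝ → ℝ) (hb : GradCutoff b)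
    (c_b : ℝ) (hc_b : 0 < c_b)
    (hH2 : ∀ θ ∈ Icc (π/4) (3*π/4), c_b ≤ b (Real.cos θ))
    (f₀ : R3 → ℝ) (hf₀meas : Measurable f₀)
    (hf₀bd : ∀ᵐ v : R3 ∂volume, 0 ≤ f₀ v ∧ f₀ v ≤ 1) (hf₀L12 : MemL1s 2 f₀)
    (f : ℝ → R3 → ℝ) (hf : IsFDSolution γ b f₀ f)
    (ε : ℝ) (hε₀ : 0 < ε) (hε₁ : ε < 1) (vbar : R3) (δ : ℝ) (hδ : 0 < δ)
    (r₀ : ℝ) (hr₀pos : 0 < r₀) (hvbar : ‖vbar‖ < r₀)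
    (hinit : ∀ v : R3, ‖v - vbar‖ ≤ δ → ε ≤ f₀ v ∧ f₀ v ≤ 1 - ε) :
    ∃ C₁ C₂ : ℝ → ℝ,
      (∀ t : ℝ, 0 < t → 0 < C₁ t ∧ 0 < C₂ t) ∧
      (∀ t : ℝ, 0 < t → ∀ᵐ v : R3 ∂volume,
        C₁ t * Real.exp (-(C₂ t) * ‖v‖ ^ 2) ≤ f t v ∧
        f t v ≤ 1 - C₁ t * Real.exp (-(C₂ t) * ‖v‖ ^ (2 * Real.log 3 / Real.log 2))) ∧
      (∀ T : ℝ, 1 ≤ T → ∃ m > (0:ℝ), ∀ t ∈ Icc T⁻¹ T, m ≤ C₁ t) ∧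
      (∀ T : ℝ, 1 ≤ T → ∃ M : ℝ, ∀ t ∈ Icc T⁻¹ T, C₂ t ≤ M) := by
  exact gaussian_lower_bound_creation_general hγ₀ hγ₂ hb hc_b hH2 hf hε₀ hδ (.of_forall hinit)
    two_le_two_mul_log_three_div_log_two
end
end
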